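/- arXiv:1311.1108 — 2 statements merged into one kernel-verified Lean document; each statement's English description precedes it below -/
import Mathlib

section
/- For all positive integers k and r, every graph G with treewidth at least 2k²r² contains k pairwise vertex-disjoint subgraphs each containing θ_r as a minor. -/
open SimpleGraph

/-- `H` is a model of `θ_r` in `G`: its vertex set splits into two disjoint
connected parts with exactly `r` edges of `H` between them (so contracting
each part yields the multigraph with two vertices and `r` parallel edges). -/
def IsThetaModel {V : Type} (r : ℕ) (G : SimpleGraph V) (H : G.Subgraph) : Prop :=
  ∃ A B : Set V, A ∪ B = H.verts ∧ Disjoint A B ∧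
    (H.induce A).Connected ∧ (H.induce B).Connected ∧
    {e ∈ H.edgeSet | ∃ a ∈ A, ∃ b ∈ B, e = s(a, b)}.ncard = r

/-- `G` contains `k` pairwise vertex-disjoint models of `θ_r`. -/
def HasVertexPacking {V : Type} (r : ℕ) (G : SimpleGraph V) (k : ℕ) : Prop :=
  ∃ H : Fin k → G.Subgraph, (∀ i, IsThetaModel r G (H i)) ∧
    ∀ i j, i ≠ j → Disjoint (H i).verts (H j).verts

/-- A tree decomposition of `G` with index type `ι`. -/
structure TreeDecomp {V : Type} (G : SimpleGraph V) (ι : Type) where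
  tree : SimpleGraph ι
  isTree : tree.IsTree
  bag : ι → Set V
  mem_bag : ∀ v, ∃ i, v ∈ bag i
  edge_bag : ∀ ⦃u v⦄, G.Adj u v → ∃ i, u ∈ bag i ∧ v ∈ bag i
  conn_bag : ∀ v, (tree.induce {i | v ∈ bag i}).Connected


inductive RD {V : Type} (G : SimpleGraph V) (N : ℕ) (F : Set (Set V)) : Set V → Set V → Prop
  | leaf (D X : Set V) (h1 : ∀ B ∈ F, ¬ B ⊆ D) (h2 : ∀ u ∈ D, u ∉ X)
      (h3 : ∀ u ∈ D, ∀ v, G.Adj u v → v ∈ D ∨ v ∈ X) (h4 : X.ncard ≤ N) : RD G N F D X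
  | shift (D Y X Z : Set V) (h : RD G N F D Y) (hZ : ∀ u, u ∈ Z ↔ u ∈ D ∨ (u ∈ Y ∧ u ∉ X))
      (h4 : X.ncard ≤ N) (h2 : ∀ u ∈ D, u ∉ X)
      (h3 : ∀ u ∈ Y, u ∉ X → ∀ v, G.Adj u v → v ∈ D ∨ v ∈ Y) : RD G N F Z X
  | join (D E X Z : Set V) (h : RD G N F D X) (h' : RD G N F E X) (hd : ∀ u ∈ D, u ∉ E)
      (hZ : ∀ u, u ∈ Z ↔ u ∈ D ∨ u ∈ E) : RD G N F Z X

lemma RD.inv {V : Type} {G : SimpleGraph V} {N : ℕ} {F : Set (Set V)} {D X : Set V}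
    (h : RD G N F D X) : (∀ u ∈ D, u ∉ X) ∧ (∀ u ∈ D, ∀ v, G.Adj u v → v ∈ D ∨ v ∈ X) ∧
      X.ncard ≤ N := by
  induction h with
  | leaf D X h1 h2 h3 h4 => exact ⟨h2, h3, h4⟩
  | shift D Y X Z h hZ h4 h2 h3 ih =>
    obtain ⟨i1, i2, i3⟩ := ih
    refine ⟨by grind, ?_, h4⟩
    intro u hu v huv
    rw [hZ] at hu ⊢
    grind
  | join D E X Z h h' hd hZ ih ih' =>
    obtain ⟨i1, i2, i3⟩ := ih
    obtain ⟨j1, j2, j3⟩ := ih'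
    refine ⟨by grind, ?_, i3⟩
    intro u hu v huv
    rw [hZ] at hu ⊢
    grind

/-- set connectivity -/
def CSet {V : Type} (G : SimpleGraph V) (C : Set V) : Prop :=
  C.Nonempty ∧ ∀ u ∈ C, ∀ v ∈ C, ∃ p : G.Walk u v, ∀ w ∈ p.support, w ∈ C

def SepAB {V : Type} (G : SimpleGraph V) (C1 C2 A B : Set V) : Prop :=
  (∀ u, u ∈ A ∨ u ∈ B) ∧ (∀ u v, G.Adj u v → u ∉ B → v ∈ A) ∧ (∀ u ∈ C1, u ∉ B) ∧
    (∀ u ∈ C2, u ∉ A)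

lemma SepAB.symm {V : Type} {G : SimpleGraph V} {C1 C2 A B : Set V} (h : SepAB G C1 C2 A B) :
    SepAB G C2 C1 B A := by
  obtain ⟨h1, h2, h3, h4⟩ := h
  refine ⟨fun u => (h1 u).symm, ?_, h4, h3⟩
  intro u v huv hu
  by_contra hv
  exact hu (h2 v u huv.symm hv)

lemma RD.size {V : Type} [Finite V] {G : SimpleGraph V} {C1 C2 A B : Set V}
    (hs : SepAB G C1 C2 A B)
    (hmin : ∀ A' B', SepAB G C1 C2 A' B' → (A ∩ B).ncard ≤ (A' ∩ B').ncard)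
    {D X : Set V} (i1 : ∀ u ∈ D, u ∉ X) (i2 : ∀ u ∈ D, ∀ v, G.Adj u v → v ∈ D ∨ v ∈ X)
    (hD : ∀ u ∈ C1, u ∉ D) (hX : ∀ u ∈ C1, u ∉ X) :
    ((X ∩ B) ∪ (D ∩ A ∩ B)).ncard ≤ X.ncard := by
  obtain ⟨s1, s2, s3, s4⟩ := hs
  have h := hmin (A \ D) (B ∪ D ∪ X) ⟨by grind, by
    intro u v huv hu
    have h1 := s2 u v huv
    have h2 := i2 v
    have := huv.symm
    grind, by grind, by grind⟩
  have e1 : (A \ D) ∩ (B ∪ D ∪ X) ⊆ ((A ∩ B) \ D) ∪ (X \ B) := by grind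
  have e2 := Set.ncard_le_ncard e1 (Set.toFinite _)
  have e3 := Set.ncard_union_le ((A ∩ B) \ D) (X \ B)
  have e4 := Set.ncard_inter_add_ncard_sdiff_eq_ncard (A ∩ B) D (Set.toFinite _)
  have e5 := Set.ncard_inter_add_ncard_sdiff_eq_ncard X B (Set.toFinite _)
  have e6 := Set.ncard_union_le (X ∩ B) (D ∩ A ∩ B)
  have e7 : D ∩ A ∩ B = A ∩ B ∩ D := by grind
  rw [e7] at e6 ⊢
  omega

lemma RD.uncross {V : Type} [Finite V] {G : SimpleGraph V} {N : ℕ} {F : Set (Set V)}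
    {C1 C2 A B : Set V}
    (hs : SepAB G C1 C2 A B)
    (hmin : ∀ A' B', SepAB G C1 C2 A' B' → (A ∩ B).ncard ≤ (A' ∩ B').ncard)
    {D X : Set V} (h : RD G N F D X)
    (hD : ∀ u ∈ C1, u ∉ D) (hX : ∀ u ∈ C1, u ∉ X) :
    RD G N F (D \ A) ((X ∩ B) ∪ (D ∩ A ∩ B)) := by
  have hinv := h.inv
  have hsz := RD.size hs hmin hinv.1 hinv.2.1 hD hX
  have hsz' := hsz.trans hinv.2.2
  clear hsz
  have s1 := hs.1
  have s2 := hs.symm.2.1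
  have s3 := hs.2.2.1
  induction h with
  | leaf D X h1 h2 h3 h4 =>
    refine RD.leaf _ _ (fun B' hB' hsub => h1 B' hB' (hsub.trans Set.sdiff_subset)) (by grind) ?_ hsz'
    intro u hu v huv
    have := s2 u v huv
    have := h3 u
    grind
  | shift D Y X Z h hZ h4 h2 h3 ih =>
    have hinv' := h.inv
    have hDD : ∀ u ∈ C1, u ∉ D := by grind
    have hYY : ∀ u ∈ C1, u ∉ Y := by grind
    have hsz := RD.size hs hmin hinv'.1 hinv'.2.1 hDD hYY
    have ih := ih hDD hYY hinv' (hsz.trans hinv'.2.2)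
    refine RD.shift _ _ _ _ ih ?_ hsz' ?_ ?_
    · grind
    · grind
    · intro u hu hu' v huv
      have := s2 u v huv
      have := h3 u
      grind
  | join D E X Z h h' hd hZ ih ih' =>
    have hDD : ∀ u ∈ C1, u ∉ D := by grind
    have hEE : ∀ u ∈ C1, u ∉ E := by grind
    have hi := h.inv
    have hi' := h'.inv
    have ih := ih hDD hX hi ((RD.size hs hmin hi.1 hi.2.1 hDD hX).trans hi.2.2)
    have ih' := ih' hEE hX hi' ((RD.size hs hmin hi'.1 hi'.2.1 hEE hX).trans hi.2.2)
    refine RD.join (D \ A) (E \ A) _ _ ?_ ?_ (by grind) (by grind)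
    · refine RD.shift _ _ _ _ ih (by grind) hsz' (by grind) (by grind)
    · refine RD.shift _ _ _ _ ih' (by grind) hsz' (by grind) (by grind)

lemma RD.half {V : Type} [Finite V] {G : SimpleGraph V} {N : ℕ} {F : Set (Set V)}
    {C1 C2 A B : Set V}
    (hs : SepAB G C1 C2 A B)
    (hmin : ∀ A' B', SepAB G C1 C2 A' B' → (A ∩ B).ncard ≤ (A' ∩ B').ncard)
    {X : Set V} (hX : ∀ u ∈ C1, u ∉ X) (h : RD G N F (C1 ∪ X)ᶜ X) :
    RD G N F Aᶜ (A ∩ B) := by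
  have h1 := RD.uncross hs hmin h (by grind) hX
  have hi := h1.inv
  have s1 := hs.1
  have s2 := hs.symm.2.1
  have s3 := hs.2.2.1
  refine RD.shift _ _ _ _ h1 ?_ ?_ ?_ ?_
  · grind
  · refine (Set.ncard_le_ncard ?_ (Set.toFinite _)).trans hi.2.2
    grind
  · grind
  · intro u hu hu' v huv
    have := s2 u v huv
    grind

lemma RD.reroot {V : Type} {G : SimpleGraph V} {N : ℕ} {F : Set (Set V)} {C : Set V}
    (hC : C.Nonempty)
    (hup : ∀ v, v ∉ C → (∃ u ∈ C, G.Adj u v) → insert v C ∈ F)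
    {D X : Set V} (h : RD G N (F \ {C}) D X) :
    RD G N F D X ∨ (C ⊆ D ∧ (RD G N F (D ∪ X)ᶜ X →
      ∃ Y : Set V, (∀ u ∈ C, u ∉ Y) ∧ RD G N F (C ∪ Y)ᶜ Y)) := by
  induction h with
  | leaf D X h1 h2 h3 h4 =>
    by_cases hCD : C ⊆ D
    · right
      refine ⟨hCD, fun h => ⟨X, by grind, ?_⟩⟩
      have hl : RD G N F (D \ C) X := by
        refine RD.leaf _ _ ?_ (by grind) ?_ h4
        · intro B hB hsub
          refine h1 B ⟨hB, ?_⟩ (by grind)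
          rintro rfl
          obtain ⟨x, hx⟩ := hC
          grind
        · intro u hu v huv
          by_cases hv : v ∈ C
          · exfalso
            have := hup u hu.2 ⟨v, hv, huv.symm⟩
            refine h1 _ ⟨this, ?_⟩ ?_
            · intro he
              have : u ∈ insert u C := by simp
              grind
            · grind
          · have := h3 u hu.1 v huv
            grind
      exact RD.join _ _ _ _ h hl (by grind) (by grind)
    · left
      refine RD.leaf _ _ ?_ h2 h3 h4
      intro B hB hsub
      by_cases hBC : B = C
      · grind
      · exact h1 B ⟨hB, hBC⟩ hsub
  | shift D Y X Z h hZ h4 h2 h3 ih =>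
    have hi := h.inv
    rcases ih with ih | ⟨ih1, ih2⟩
    · left; exact RD.shift _ _ _ _ ih hZ h4 h2 h3
    · right
      refine ⟨by grind, fun hr => ih2 ?_⟩
      refine RD.shift _ _ _ _ hr (by grind) hi.2.2 (by grind) ?_
      intro u hu hu' v huv
      by_contra hv
      have a1 := h3 v
      have a2 := hi.2.1 v
      have := huv.symm
      grind
  | join D E X Z h h' hd hZ ih ih' =>
    have hi := h.inv
    have hi' := h'.inv
    obtain ⟨x, hx⟩ := hC
    rcases ih with ih | ⟨ih1, ih2⟩ <;> rcases ih' with ih' | ⟨ih1', ih2'⟩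
    · left; exact RD.join _ _ _ _ ih ih' hd hZ
    · right
      refine ⟨by grind, fun hr => ih2' ?_⟩
      exact RD.join _ _ _ _ hr ih (by grind) (by grind)
    · right
      refine ⟨by grind, fun hr => ih2 ?_⟩
      exact RD.join _ _ _ _ hr ih' (by grind) (by grind)
    · exfalso; grind

def Touch {V : Type} (G : SimpleGraph V) (C D : Set V) : Prop :=
  ∃ u ∈ C, ∃ v ∈ D, u = v ∨ G.Adj u v

lemma cset_insert {V : Type} {G : SimpleGraph V} {C : Set V} (hC : CSet G C) {v : V}
    (h : ∃ u ∈ C, G.Adj u v) : CSet G (insert v C) := by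
  obtain ⟨u, hu, huv⟩ := h
  have key : ∀ x ∈ C, ∃ p : G.Walk x v, ∀ w ∈ p.support, w ∈ insert v C := by
    intro x hx
    obtain ⟨p, hp⟩ := hC.2 x hx u hu
    refine ⟨p.concat huv, ?_⟩
    intro w hw
    rw [Walk.support_concat] at hw
    simp at hw
    grind
  refine ⟨⟨v, by simp⟩, ?_⟩
  intro x hx y hy
  rcases hx with rfl | hx <;> rcases hy with rfl | hy
  · exact ⟨Walk.nil, by simp⟩
  · obtain ⟨p, hp⟩ := key y hy
    exact ⟨p.reverse, by simpa using hp⟩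
  · exact key x hx
  · obtain ⟨p, hp⟩ := hC.2 x hx y hy
    exact ⟨p, fun w hw => Or.inr (hp w hw)⟩

/-- duality -/
lemma exists_bramble {V : Type} [Finite V] (G : SimpleGraph V) (N : ℕ)
    (h : ¬ RD G N {C | CSet G C} Set.univ ∅) :
    ∃ F : Set (Set V), (∀ C ∈ F, CSet G C) ∧ (∀ C ∈ F, ∀ D ∈ F, Touch G C D) ∧
      ∀ X : Set V, X.ncard ≤ N → ∃ C ∈ F, ∀ u ∈ C, u ∉ X := by
  classical
  let P : Set (Set V) → Prop := fun F => (∀ C ∈ F, CSet G C) ∧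
    (∀ C ∈ F, ∀ D, CSet G D → C ⊆ D → D ∈ F) ∧ ¬ RD G N F Set.univ ∅
  have hP : P {C | CSet G C} := ⟨by simp, by simp; grind, h⟩
  obtain ⟨F, hF⟩ : ∃ F, Minimal P F := by
    obtain ⟨F, -, hF⟩ := (Set.toFinite {F | P F}).exists_le_minimal hP
    exact ⟨F, hF⟩
  obtain ⟨⟨f1, f2, f3⟩, hmin⟩ := hF
  refine ⟨F, f1, ?_, ?_⟩
  · -- touching
    have reroot : ∀ C, Minimal (· ∈ F) C → ∃ Y : Set V, (∀ u ∈ C, u ∉ Y) ∧ RD G N F (C ∪ Y)ᶜ Y := by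
      intro C hC
      have hCF := hC.1
      have : RD G N (F \ {C}) Set.univ ∅ := by
        by_contra hn
        have := hmin (y := F \ {C}) ⟨by grind, ?_, hn⟩ Set.sdiff_subset hCF
        · grind
        · intro D hD E hE hDE
          refine ⟨f2 D hD.1 E hE hDE, ?_⟩
          rintro rfl
          exact hD.2 (Set.Subset.antisymm hDE (hC.2 hD.1 hDE))
      have hup : ∀ v, v ∉ C → (∃ u ∈ C, G.Adj u v) → insert v C ∈ F := fun v _ hu =>
        f2 C hCF _ (cset_insert (f1 C hCF) hu) (by grind)
      rcases RD.reroot (f1 C hCF).1 hup this with h | ⟨-, h⟩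
      · exact absurd h f3
      · refine h ?_
        refine RD.leaf _ _ ?_ (by simp) (by simp) (by simp)
        intro B hB hsub
        obtain ⟨x, hx⟩ := (f1 B hB).1
        simpa using hsub hx
    intro C hC D hD
    obtain ⟨C1, hC1, hC1m⟩ := (Set.toFinite F).exists_le_minimal hC
    obtain ⟨C2, hC2, hC2m⟩ := (Set.toFinite F).exists_le_minimal hD
    by_contra hnt
    have hnt1 : ∀ u ∈ C1, ∀ v ∈ C2, u ≠ v ∧ ¬ G.Adj u v := by
      intro u hu v hv
      constructor
      · intro he
        exact hnt ⟨u, hC1 hu, v, hC2 hv, Or.inl he⟩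
      · intro he
        exact hnt ⟨u, hC1 hu, v, hC2 hv, Or.inr he⟩
    have hex : ∃ n, ∃ A B, SepAB G C1 C2 A B ∧ (A ∩ B).ncard = n := by
      refine ⟨_, C1 ∪ {v | ∃ u ∈ C1, G.Adj u v}, C1ᶜ, ⟨?_, ?_, ?_, ?_⟩, rfl⟩
      · grind
      · intro u v huv hu
        right
        exact ⟨u, by simpa using hu, huv⟩
      · simp
      · intro v hv hv'
        rcases hv' with hv' | ⟨u, hu, huv⟩
        · exact (hnt1 v hv' v hv).1 rfl
        · exact (hnt1 u hu v hv).2 huv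
    obtain ⟨A, B, hs, hsn⟩ := Nat.find_spec hex
    have hm : ∀ A' B', SepAB G C1 C2 A' B' → (A ∩ B).ncard ≤ (A' ∩ B').ncard := by
      intro A' B' h'
      rw [hsn]
      exact Nat.find_min' hex ⟨A', B', h', rfl⟩
    have hm' : ∀ A' B', SepAB G C2 C1 A' B' → (B ∩ A).ncard ≤ (A' ∩ B').ncard := by
      intro A' B' h'
      have := hm _ _ h'.symm
      rwa [Set.inter_comm B A, Set.inter_comm A' B']
    obtain ⟨X1, hX1, hR1⟩ := reroot C1 hC1m
    obtain ⟨X2, hX2, hR2⟩ := reroot C2 hC2m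
    have a1 := RD.half hs hm hX1 hR1
    have a2 := RD.half hs.symm hm' hX2 hR2
    rw [Set.inter_comm] at a2
    have s1 := hs.1
    have a3 : RD G N F (A ∩ B)ᶜ (A ∩ B) := RD.join _ _ _ _ a1 a2 (by grind) (by grind)
    exact f3 (RD.shift _ _ _ _ a3 (by grind) (by simp) (by grind) (by grind))
  · intro X hX
    by_contra hn
    push Not at hn
    apply f3
    have : RD G N F Xᶜ X := by
      refine RD.leaf _ _ ?_ (by grind) (by grind) hX
      intro B hB hsub
      obtain ⟨u, hu, hu'⟩ := hn B hB
      exact hsub hu hu'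
    exact RD.shift _ _ _ _ this (by grind) (by simp) (by grind) (by grind)

lemma cset_iff {V : Type} {G : SimpleGraph V} {C : Set V} : CSet G C ↔ (G.induce C).Connected := by
  constructor
  · rintro ⟨⟨u, hu⟩, h⟩
    refine induce_connected_of_patches u hu ?_
    intro v hv
    obtain ⟨p, hp⟩ := h u hu v hv
    refine ⟨{w | w ∈ p.support}, hp, by simp, by simp, ?_⟩
    exact p.connected_induce_support.preconnected _ _
  · intro h
    refine ⟨?_, ?_⟩
    · obtain ⟨x⟩ := h.nonempty
      exact ⟨x.1, x.2⟩
    · intro u hu v hv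
      obtain ⟨p⟩ := h.preconnected ⟨u, hu⟩ ⟨v, hv⟩
      have key : ∀ (x y : C) (_ : (G.induce C).Walk x y),
          ∃ q : G.Walk x.1 y.1, ∀ w ∈ q.support, w ∈ C := by
        intro x y p
        induction p with
        | nil =>
          rename_i x
          exact ⟨Walk.nil, by simp⟩
        | cons hadj p ih =>
          rename_i x y z
          obtain ⟨q, hq⟩ := ih
          have hadj' : G.Adj x.1 y.1 := hadj
          refine ⟨Walk.cons hadj' q, ?_⟩
          intro w hw
          rw [Walk.support_cons, List.mem_cons] at hw
          rcases hw with rfl | hw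
          · exact x.2
          · exact hq w hw
      exact key _ _ p

lemma CSet.mapg {V W : Type} {G : SimpleGraph V} {H : SimpleGraph W} (f : G →g H) {C : Set V}
    (h : CSet G C) : CSet H (f '' C) := by
  refine ⟨h.1.image _, ?_⟩
  rintro _ ⟨u, hu, rfl⟩ _ ⟨v, hv, rfl⟩
  obtain ⟨p, hp⟩ := h.2 u hu v hv
  refine ⟨p.map f, ?_⟩
  intro w hw
  simp at hw
  grind

lemma CSet.union_touch {V : Type} {G : SimpleGraph V} {C D : Set V} (hC : CSet G C)
    (hD : CSet G D) (h : Touch G C D) : CSet G (C ∪ D) := by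
  obtain ⟨u, hu, v, hv, huv⟩ := h
  have h1 := (cset_iff.1 hC).preconnected
  have h2 := (cset_iff.1 hD).preconnected
  rw [cset_iff]
  rcases huv with rfl | huv
  · exact induce_union_connected h1 h2 ⟨u, hu, hv⟩
  · exact connected_induce_union h1 h2 hu hv huv

lemma sum_walk_inl {α β : Type} {S : SimpleGraph α} {T : SimpleGraph β} {e : Set (Sym2 (α ⊕ β))}
    {e' : Set (Sym2 α)}
    (he : ∀ u v, s(u, v) ∈ e' → s(Sum.inl u, Sum.inl v) ∈ e) {x y : α ⊕ β}
    (p : ((S ⊕g T).deleteEdges e).Walk x y) (u : α) (hx : x = Sum.inl u) :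
    ∃ v, y = Sum.inl v ∧ (S.deleteEdges e').Reachable u v := by
  induction p generalizing u with
  | nil => exact ⟨u, hx, Reachable.refl _⟩
  | cons h p ih =>
    rename_i a b c
    subst hx
    rcases b with b | b
    · obtain ⟨v, hv, hr⟩ := ih b rfl
      refine ⟨v, hv, Reachable.trans (Adj.reachable ?_) hr⟩
      simp at h ⊢
      exact ⟨h.1, fun hh => h.2 (he _ _ hh)⟩
    · simp at h

lemma acyclic_sum {α β : Type} {S : SimpleGraph α} {T : SimpleGraph β} (hS : S.IsAcyclic)
    (hT : T.IsAcyclic) : (S ⊕g T).IsAcyclic := by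
  have key : ∀ {α β : Type} {S : SimpleGraph α} {T : SimpleGraph β} (_ : S.IsAcyclic) (u v : α),
      S.Adj u v → (S ⊕g T).IsBridge s(Sum.inl u, Sum.inl v) := by
    intro α β S T hS u v huv
    have h1 := isAcyclic_iff_forall_adj_isBridge.1 hS huv
    rw [isBridge_iff] at h1 ⊢
    rintro ⟨p⟩
    obtain ⟨w, hw, hr⟩ := sum_walk_inl (e' := {s(u, v)}) (by
      intro a b hab
      simp at hab ⊢
      exact hab) p u rfl
    simp at hw
    subst hw
    exact h1 hr
  rw [isAcyclic_iff_forall_adj_isBridge]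
  rintro (u | u) (v | v) huv
  · exact key hS u v (by simpa using huv)
  · simp at huv
  · simp at huv
  · have h1 := key (T := S) hT u v (by simpa using huv)
    rw [isBridge_iff] at h1 ⊢
    intro hr
    apply h1
    let f : (S ⊕g T).deleteEdges {s(Sum.inr u, Sum.inr v)} →g
      (T ⊕g S).deleteEdges {s(Sum.inl u, Sum.inl v)} :=
      { toFun := Sum.swap
        map_rel' := by
          rintro (a | a) (b | b) hab <;> simp at hab ⊢ <;> tauto }
    exact hr.map f

lemma tree_join {α β : Type} {S : SimpleGraph α} {T : SimpleGraph β} (hS : S.IsTree)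
    (hT : T.IsTree) (a : α) (b : β) :
    ((S ⊕g T) ⊔ edge (Sum.inl a) (Sum.inr b)).IsTree :=
  ⟨Connected.sum_sup_edge hS.1 hT.1,
    IsAcyclic.sup_edge_of_not_reachable (not_reachable_sum_inl_inr _ _) (acyclic_sum hS.2 hT.2)⟩

/-- Rooted tree decomposition of `G[U]` with root bag `X`. -/
def HasTD {V : Type} (G : SimpleGraph V) (N : ℕ) (U X : Set V) : Prop :=
  ∃ (ι : Type) (T : SimpleGraph ι) (bag : ι → Set V) (r : ι), T.IsTree ∧ bag r = X ∧
    (∀ i, (bag i).ncard ≤ N) ∧ (∀ i, ∀ v ∈ bag i, v ∈ U) ∧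
    (∀ u ∈ U, ∀ v ∈ U, G.Adj u v → ∃ i, u ∈ bag i ∧ v ∈ bag i) ∧
    (∀ v ∈ U, CSet T {i | v ∈ bag i})

lemma HasTD.single {V : Type} {G : SimpleGraph V} {N : ℕ} {X : Set V} (h : X.ncard ≤ N) :
    HasTD G N X X := by
  refine ⟨Unit, ⊥, fun _ => X, (), IsTree.of_subsingleton, rfl, fun _ => h, by simp, ?_, ?_⟩
  · intro u hu v hv _
    exact ⟨(), hu, hv⟩
  · intro v hv
    refine ⟨⟨(), hv⟩, ?_⟩
    intro i _ j _
    exact ⟨Walk.nil, by simp [hv]⟩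

lemma HasTD.join {V : Type} {G : SimpleGraph V} {N : ℕ} {U W X Y : Set V}
    (h1 : HasTD G N U X) (h2 : HasTD G N W Y) (hUW : ∀ v ∈ U, v ∈ W → v ∈ X ∧ v ∈ Y)
    (hadj : ∀ u ∈ U, ∀ v ∈ W, G.Adj u v → v ∈ U ∨ u ∈ W) : HasTD G N (U ∪ W) X := by
  obtain ⟨α, S, bs, a, hS, ha, hs1, hs2, hs3, hs4⟩ := h1
  obtain ⟨β, T, bt, b, hT, hb, ht1, ht2, ht3, ht4⟩ := h2
  let Q := (S ⊕g T) ⊔ edge (Sum.inl a) (Sum.inr b)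
  let fl : S →g Q := (Hom.ofLE (le_sup_left : (S ⊕g T) ≤ Q)).comp Embedding.sumInl.toHom
  let fr : T →g Q := (Hom.ofLE (le_sup_left : (S ⊕g T) ≤ Q)).comp Embedding.sumInr.toHom
  have hab : Q.Adj (Sum.inl a) (Sum.inr b) := by simp [Q, edge]
  refine ⟨α ⊕ β, Q, Sum.elim bs bt, Sum.inl a, tree_join hS hT a b, by simpa using ha, ?_, ?_,
    ?_, ?_⟩
  · rintro (i | i)
    · exact hs1 i
    · exact ht1 i
  · rintro (i | i) v hv
    · exact Or.inl (hs2 i v hv)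
    · exact Or.inr (ht2 i v hv)
  · have cl : ∀ u ∈ U, ∀ v ∈ U, G.Adj u v →
      ∃ i, u ∈ Sum.elim bs bt i ∧ v ∈ Sum.elim bs bt i := by
      intro u hu v hv h
      obtain ⟨i, hi⟩ := hs3 u hu v hv h
      exact ⟨Sum.inl i, hi⟩
    have cr : ∀ u ∈ W, ∀ v ∈ W, G.Adj u v →
      ∃ i, u ∈ Sum.elim bs bt i ∧ v ∈ Sum.elim bs bt i := by
      intro u hu v hv h
      obtain ⟨i, hi⟩ := ht3 u hu v hv h
      exact ⟨Sum.inr i, hi⟩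
    rintro u (hu | hu) v (hv | hv) h
    · exact cl u hu v hv h
    · rcases hadj u hu v hv h with h' | h'
      · exact cl u hu v h' h
      · exact cr u h' v hv h
    · rcases hadj v hv u hu h.symm with h' | h'
      · exact cl u h' v hv h
      · exact cr u hu v h' h
    · exact cr u hu v hv h
  · intro v hv
    have e : {i | v ∈ Sum.elim bs bt i} = fl '' {i | v ∈ bs i} ∪ fr '' {i | v ∈ bt i} := by
      ext (i | i) <;> simp [fl, fr]
    rw [e]
    by_cases hU : v ∈ U
    · by_cases hW : v ∈ W
      · refine ((hs4 v hU).mapg fl).union_touch ((ht4 v hW).mapg fr) ?_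
        have := hUW v hU hW
        refine ⟨Sum.inl a, ⟨a, by simp [ha, this.1], rfl⟩, Sum.inr b,
          ⟨b, by simp [hb, this.2], rfl⟩, Or.inr hab⟩
      · have : {i | v ∈ bt i} = ∅ := by
          ext i; simp; exact fun h => hW (ht2 i v h)
        rw [this]
        simpa using (hs4 v hU).mapg fl
    · have hW : v ∈ W := by grind
      have : {i | v ∈ bs i} = ∅ := by
        ext i; simp; exact fun h => hU (hs2 i v h)
      rw [this]
      simpa using (ht4 v hW).mapg fr

lemma RD.hasTD {V : Type} {G : SimpleGraph V} {N : ℕ} {D X : Set V}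
    (h : RD G N {C | CSet G C} D X) : HasTD G N (D ∪ X) X := by
  induction h with
  | leaf D X h1 h2 h3 h4 =>
    have : D = ∅ := by
      by_contra hne
      obtain ⟨x, hx⟩ := Set.nonempty_iff_ne_empty.2 hne
      refine h1 {x} ⟨by simp, ?_⟩ (by simpa using hx)
      rintro u rfl v rfl
      exact ⟨Walk.nil, by simp⟩
    subst this
    simpa using HasTD.single h4
  | shift D Y X Z h hZ h4 h2 h3 ih =>
    have hi := h.inv
    have e : Z ∪ X = X ∪ (D ∪ Y) := by grind
    rw [e]
    refine (HasTD.single h4).join ih (by grind) ?_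
    intro u hu v hv huv
    have a1 := hi.2.1 v
    have a2 := h3 v
    have := huv.symm
    grind
  | join D E X Z h h' hd hZ ih ih' =>
    have hi := h.inv
    have e : Z ∪ X = (D ∪ X) ∪ (E ∪ X) := by grind
    rw [e]
    refine ih.join ih' (by grind) ?_
    intro u hu v hv huv
    have a1 := hi.2.1 u
    grind

lemma bramble_of_tw {V : Type} [Finite V] (G : SimpleGraph V) (N : ℕ)
    (htw : ∀ (ι : Type) (D : TreeDecomp G ι), ∃ i, N < (D.bag i).ncard) :
    ∃ F : Set (Set V), (∀ C ∈ F, CSet G C) ∧ (∀ C ∈ F, ∀ D ∈ F, Touch G C D) ∧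
      ∀ X : Set V, X.ncard ≤ N → ∃ C ∈ F, ∀ u ∈ C, u ∉ X := by
  apply exists_bramble
  intro h
  obtain ⟨ι, T, bag, r, hT, -, h1, -, h3, h4⟩ := h.hasTD
  obtain ⟨i, hi⟩ := htw ι
    { tree := T
      isTree := hT
      bag := bag
      mem_bag := fun v => (h4 v (by simp)).1
      edge_bag := fun u v huv => h3 u (by simp) v (by simp) huv
      conn_bag := fun v => cset_iff.1 (h4 v (by simp)) }
  exact absurd (h1 i) (not_le.2 hi)


/-- trimming a walk -/
lemma exists_trim {V : Type} {G : SimpleGraph V} {A B : Set V} {a b : V} (p : G.Walk a b)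
    (ha : a ∈ A) (hb : b ∈ B) : ∃ (a' b' : V) (q : G.Walk a' b'), a' ∈ A ∧ b' ∈ B ∧ q.IsPath ∧
      (∀ v ∈ q.support, v ∈ p.support) ∧ (∀ v ∈ q.support, v ∈ A → v = a') ∧
      (∀ v ∈ q.support, v ∈ B → v = b') := by
  classical
  have hex : ∃ n, ∃ (a' b' : V) (q : G.Walk a' b'), a' ∈ A ∧ b' ∈ B ∧ 
      (∀ v ∈ q.support, v ∈ p.support) ∧ q.length = n := ⟨_, a, b, p, ha, hb, by simp, rfl⟩
  obtain ⟨a', b', q, ha', hb', hs, hl⟩ := Nat.find_spec hex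
  have hmin : ∀ (a'' b'' : V) (q' : G.Walk a'' b''), a'' ∈ A → b'' ∈ B → 
      (∀ v ∈ q'.support, v ∈ p.support) → q.length ≤ q'.length := by
    intro a'' b'' q' h1 h2 h3
    rw [hl]
    exact Nat.find_min' hex ⟨a'', b'', q', h1, h2, h3, rfl⟩
  refine ⟨a', b', q, ha', hb', ?_, hs, ?_, ?_⟩
  · have h1 := hmin a' b' q.bypass ha' hb' (fun v hv => hs v (q.support_bypass_subset_support hv))
    have h2 : q.bypass.length = q.length := le_antisymm q.length_bypass_le_length h1
    rw [← Walk.bypass_eq_self_of_length_le_length_bypass q h2.ge]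
    exact q.bypass_isPath
  · intro v hv hvA
    have h1 := hmin v b' (q.dropUntil v hv) hvA hb'
      (fun w hw => hs w (q.support_dropUntil_subset_support hv hw))
    have h2 := congrArg Walk.length (q.take_spec hv)
    rw [Walk.length_append] at h2
    exact (Walk.eq_of_length_eq_zero (p := q.takeUntil v hv) (by omega)).symm
  · intro v hv hvB
    have h1 := hmin a' v (q.takeUntil v hv) ha' hvB
      (fun w hw => hs w (q.support_takeUntil_subset_support hv hw))
    have h2 := congrArg Walk.length (q.take_spec hv)
    rw [Walk.length_append] at h2
    exact (Walk.eq_of_length_eq_zero (p := q.dropUntil v hv) (by omega))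

def Linked {V : Type} (G : SimpleGraph V) (A B : Set V) (n : ℕ) : Prop :=
  ∃ (a b : Fin n → V) (p : ∀ i, G.Walk (a i) (b i)), (∀ i, a i ∈ A) ∧ (∀ i, b i ∈ B) ∧
    (∀ i, (p i).IsPath) ∧ (∀ i, ∀ v ∈ (p i).support, v ∈ A → v = a i) ∧
    (∀ i, ∀ v ∈ (p i).support, v ∈ B → v = b i) ∧
    (∀ i j, ∀ v ∈ (p i).support, v ∈ (p j).support → i = j)

lemma Linked.of_walks {V : Type} {G : SimpleGraph V} {A B : Set V} {n : ℕ}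
    (a b : Fin n → V) (p : ∀ i, G.Walk (a i) (b i)) (ha : ∀ i, a i ∈ A) (hb : ∀ i, b i ∈ B)
    (hd : ∀ i j, ∀ v ∈ (p i).support, v ∈ (p j).support → i = j) : Linked G A B n := by
  choose a' b' q h1 h2 h3 h4 h5 h6 using fun i => exists_trim (p i) (ha i) (hb i)
  exact ⟨a', b', q, h1, h2, h3, h5, h6, fun i j v hi hj => hd i j v (h4 i v hi) (h4 j v hj)⟩

def Separates {V : Type} (G : SimpleGraph V) (A B S : Set V) : Prop :=
  ∀ a ∈ A, ∀ b ∈ B, ∀ p : G.Walk a b, ∃ v ∈ p.support, v ∈ S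

lemma Separates.symm {V : Type} {G : SimpleGraph V} {A B S : Set V} (h : Separates G A B S) :
    Separates G B A S := by
  intro b hb a ha p
  obtain ⟨v, hv, hvS⟩ := h a ha b hb p.reverse
  exact ⟨v, by simpa using hv, hvS⟩


lemma walk_prefix {V : Type} {G G' : SimpleGraph V} {x y : V}
    (hG' : ∀ u v, G.Adj u v → ¬ G'.Adj u v → (u = x ∧ v = y) ∨ (u = y ∧ v = x))
    (S : Set V) (hx : x ∈ S) {a b : V}
    (p : G.Walk a b) (hy : ∀ q : G'.Walk a y, ∃ v ∈ q.support, v ∈ S)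
    (hb : ∀ q : G'.Walk a b, ∃ v ∈ q.support, v ∈ S) :
    ∃ c ∈ S, ∃ q : G'.Walk a c, ∀ v ∈ q.support, v ∈ p.support := by
  induction p with
  | nil =>
    rename_i u
    obtain ⟨v, hv, hvS⟩ := hb Walk.nil
    simp at hv
    subst hv
    exact ⟨v, hvS, Walk.nil, by simp⟩
  | cons hadj p ih =>
    rename_i u v w
    by_cases h : u ∈ S
    · exact ⟨u, h, Walk.nil, by simp⟩
    · by_cases hv : G'.Adj u v
      · obtain ⟨c, hc, q, hq⟩ := ih (fun q => by
          obtain ⟨z, hz, hzS⟩ := hy (Walk.cons hv q)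
          simp at hz
          grind) (fun q => by
          obtain ⟨z, hz, hzS⟩ := hb (Walk.cons hv q)
          simp at hz
          grind)
        refine ⟨c, hc, Walk.cons hv q, ?_⟩
        intro z hz
        simp at hz ⊢
        grind
      · exfalso
        rcases hG' u v hadj hv with ⟨rfl, rfl⟩ | ⟨rfl, rfl⟩
        · exact h hx
        · obtain ⟨z, hz, hzS⟩ := hy Walk.nil
          simp at hz
          grind

lemma walk_split {V : Type} {G G' : SimpleGraph V} {x y : V}
    (hG' : ∀ u v, G.Adj u v → ¬ G'.Adj u v → (u = x ∧ v = y) ∨ (u = y ∧ v = x))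
    (S : Set V) {a b : V} (p : G.Walk a b) (hp : ∀ v ∈ p.support, v ∉ S) :
    (∃ q : G'.Walk a b, ∀ v ∈ q.support, v ∉ S) ∨
    ∃ x' y', ((x' = x ∧ y' = y) ∨ (x' = y ∧ y' = x)) ∧
      (∃ q : G'.Walk a x', ∀ v ∈ q.support, v ∉ S) ∧
      (∃ q : G'.Walk y' b, ∀ v ∈ q.support, v ∉ S) := by
  induction p with
  | nil => exact Or.inl ⟨Walk.nil, by simpa using hp⟩
  | cons hadj p ih =>
    rename_i u v w
    simp only [Walk.support_cons, List.mem_cons, forall_eq_or_imp] at hp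
    have hu : ∀ z ∈ (Walk.nil : G'.Walk u u).support, z ∉ S := by simpa using hp.1
    by_cases hv : G'.Adj u v
    · rcases ih hp.2 with ⟨q, hq⟩ | ⟨x', y', h1, ⟨q, hq⟩, h2⟩
      · exact Or.inl ⟨Walk.cons hv q, by simpa using ⟨hp.1, hq⟩⟩
      · exact Or.inr ⟨x', y', h1, ⟨Walk.cons hv q, by simpa using ⟨hp.1, hq⟩⟩, h2⟩
    · have := hG' u v hadj hv
      rcases ih hp.2 with ⟨q, hq⟩ | ⟨x', y', h1, ⟨q, hq⟩, h2⟩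
      · exact Or.inr ⟨u, v, this, ⟨_, hu⟩, ⟨q, hq⟩⟩
      · by_cases hy : y' = u
        · subst hy
          exact Or.inl h2
        · have : y' = v := by grind
          subst this
          exact Or.inr ⟨u, y', by grind, ⟨_, hu⟩, h2⟩

/-- combination step -/
lemma linked_combine {V : Type} [Finite V] {G G' : SimpleGraph V} (hle : G' ≤ G) {x y : V}
    {A B S : Set V} (hS : Separates G' A B S) (hx : x ∉ S) (hy : y ∉ S) (hxy : G.Adj x y)
    {n : ℕ} (hn : S.ncard + 1 = n)
    (h1 : Linked G' A (insert x S) n) (h2 : Linked G' (insert y S) B n) : Linked G A B n := by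
  classical
  obtain ⟨a, b, p, ha, hb, pp, pa, pb, pd⟩ := h1
  obtain ⟨c, d, q, hc, hd, qp, qc, qd, qdj⟩ := h2
  have hcinj : Function.Injective c := by
    intro i j hij
    refine qdj i j (c i) (by simp) ?_
    rw [hij]; simp
  have hbinj : Function.Injective b := by
    intro i j hij
    refine pd i j (b i) (by simp) ?_
    rw [hij]; simp
  have hcsurj : ∀ z ∈ insert y S, ∃ j, c j = z := by
    have : Set.range c = insert y S := by
      apply Set.eq_of_subset_of_ncard_le
      · rintro _ ⟨i, rfl⟩; exact hc i
      · rw [Set.ncard_insert_of_notMem hy (Set.toFinite _), Set.ncard_range_of_injective hcinj]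
        simp [hn]
      · exact Set.toFinite _
    intro z hz
    rw [← this] at hz
    exact hz
  have key : ∀ i, ∃ j, (b i ∈ S ∧ c j = b i) ∨ (b i = x ∧ c j = y) := by
    intro i
    rcases hb i with h | h
    · obtain ⟨j, hj⟩ := hcsurj y (by simp)
      exact ⟨j, Or.inr ⟨h, hj⟩⟩
    · obtain ⟨j, hj⟩ := hcsurj (b i) (by simp [h])
      exact ⟨j, Or.inl ⟨h, hj⟩⟩
  choose σ hσ using key
  have hσinj : ∀ i j, σ i = σ j → i = j := by
    intro i j hij
    apply hbinj
    have h1 := hσ i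
    have h2 := hσ j
    rw [hij] at h1
    grind
  have hw : ∀ i, ∃ w : G.Walk (a i) (d (σ i)), ∀ v ∈ w.support,
      v ∈ (p i).support ∨ v ∈ (q (σ i)).support := by
    intro i
    let P := (p i).mapLe hle
    let Q := (q (σ i)).mapLe hle
    have hP : P.support = (p i).support := by simp [P]
    have hQ : Q.support = (q (σ i)).support := by simp [Q]
    rcases hσ i with ⟨h1, h2⟩ | ⟨h1, h2⟩
    · refine ⟨P.append (Q.copy h2 rfl), ?_⟩
      intro v hv
      rw [Walk.mem_support_append_iff] at hv
      simpa [hP, hQ] using hv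
    · refine ⟨P.append (Walk.cons (show G.Adj (b i) (c (σ i)) by rw [h1, h2]; exact hxy) Q), ?_⟩
      intro v hv
      rw [Walk.mem_support_append_iff] at hv
      simp [hP, hQ] at hv
      rcases hv with hv | rfl | hv
      · exact Or.inl hv
      · left; simp
      · exact Or.inr hv
  choose w hw using hw
  -- common vertices lie in S
  have hcommon : ∀ i j, ∀ z ∈ (p i).support, z ∈ (q j).support → z ∈ S := by
    intro i j z hz hz'
    by_contra hzS
    have hz2 : z ∈ (q j).reverse.support := by simpa using hz'
    obtain ⟨v, hv, hvS⟩ := hS (a i) (ha i) (d j) (hd j)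
      (((p i).takeUntil z hz).append ((q j).reverse.takeUntil z hz2).reverse)
    rw [Walk.mem_support_append_iff] at hv
    rcases hv with hv | hv
    · have h1 := pb i v ((p i).support_takeUntil_subset_support hz hv) (by simp [hvS])
      subst h1
      exact hzS (by
        have h2 := Walk.endpoint_notMem_support_takeUntil (pp i) hz
        by_cases hzb : z = b i
        · rw [hzb]; exact hvS
        · exact absurd hv (h2 (Ne.symm hzb)))
    · have hv : v ∈ ((q j).reverse.takeUntil z hz2).support := by simpa using hv
      have h1 := qc j v (by
        simpa using (q j).reverse.support_takeUntil_subset_support hz2 hv) (by simp [hvS])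
      subst h1
      have h2 := Walk.endpoint_notMem_support_takeUntil (qp j).reverse hz2
      by_cases hzb : z = c j
      · exact hzS (by rw [hzb]; exact hvS)
      · exact h2 (Ne.symm hzb) hv
  refine Linked.of_walks a (fun i => d (σ i)) w ha (fun i => hd _) ?_
  have aux : ∀ i j, ∀ z ∈ (p i).support, z ∈ (q (σ j)).support → i = j := by
    intro i j z hz hz'
    have hzS := hcommon i _ z hz hz'
    have e1 := pb i z hz (by simp [hzS])
    have e2 := qc _ z hz' (by simp [hzS])
    apply hbinj
    have := hσ j
    grind
  intro i j v hi hj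
  rcases hw i v hi with hi | hi <;> rcases hw j v hj with hj | hj
  · exact pd i j v hi hj
  · exact aux i j v hi hj
  · exact (aux j i v hj hi).symm
  · exact hσinj i j (qdj _ _ v hi hj)

theorem menger {V : Type} [Finite V] (G : SimpleGraph V) : ∀ (A B : Set V) (n : ℕ),
    (∀ S, Separates G A B S → n ≤ S.ncard) → Linked G A B n := by
  induction G using WellFoundedLT.induction with
  | ind G ih =>
  intro A B n hsep
  by_cases hbot : G = ⊥
  · subst hbot
    have h1 := hsep (A ∩ B) (by
      intro a ha b hb p
      cases p with
      | nil => exact ⟨a, by simp, ha, hb⟩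
      | cons h _ => simp at h)
    have : ∃ f : Fin n → V, Function.Injective f ∧ ∀ i, f i ∈ A ∩ B := by
      have hf := Set.toFinite (A ∩ B)
      have : Nat.card (Fin n) ≤ Nat.card (A ∩ B : Set V) := by
        rw [Nat.card_fin]; exact h1
      have : Nonempty (Fin n ↪ (A ∩ B : Set V)) := by
        have hft := Fintype.ofFinite (A ∩ B : Set V)
        rw [Function.Embedding.nonempty_iff_card_le]
        rwa [Nat.card_eq_fintype_card, Nat.card_eq_fintype_card] at this
      obtain ⟨f⟩ := this
      exact ⟨fun i => f i, fun i j h => f.injective (Subtype.ext h), fun i => (f i).2⟩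
    obtain ⟨f, hf, hfm⟩ := this
    refine Linked.of_walks f f (fun i => Walk.nil) (fun i => (hfm i).1) (fun i => (hfm i).2) ?_
    intro i j v hi hj
    simp at hi hj
    exact hf (hi ▸ hj ▸ rfl)
  · obtain ⟨x, y, hxy⟩ : ∃ x y, G.Adj x y := by
      by_contra hn
      push Not at hn
      apply hbot
      ext u v
      simp [hn]
    let G' := G.deleteEdges {s(x, y)}
    have hle : G' ≤ G := G.deleteEdges_le _
    have hG' : ∀ u v, G.Adj u v → ¬ G'.Adj u v → (u = x ∧ v = y) ∨ (u = y ∧ v = x) := by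
      intro u v h1 h2
      simp [G', h1] at h2
      tauto
    have hlt : G' < G := lt_of_le_of_ne hle (by
      intro he
      have : G'.Adj x y := by rw [he]; exact hxy
      simp [G'] at this)
    have ih := ih G' hlt
    by_cases hex : ∃ S, Separates G' A B S ∧ S.ncard < n
    · obtain ⟨S, hS, hSn⟩ := hex
      have hnS : ¬ Separates G A B S := fun h => by have := hsep S h; omega
      unfold Separates at hnS
      push Not at hnS
      obtain ⟨a0, ha0, b0, hb0, p, hp⟩ := hnS
      obtain ⟨x', y', hxy', ⟨q1, hq1⟩, ⟨q2, hq2⟩⟩ := (walk_split hG' S p hp).resolve_left (by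
        rintro ⟨q, hq⟩
        obtain ⟨v, hv, hvS⟩ := hS a0 ha0 b0 hb0 q
        exact hq v hv hvS)
      have hadj : G.Adj x' y' := by
        rcases hxy' with ⟨rfl, rfl⟩ | ⟨rfl, rfl⟩
        · exact hxy
        · exact hxy.symm
      have hG1 : ∀ u v, G.Adj u v → ¬ G'.Adj u v → (u = x' ∧ v = y') ∨ (u = y' ∧ v = x') := by
        intro u v h1 h2
        have := hG' u v h1 h2
        grind
      clear hxy' hG'
      have hx : x' ∉ S := hq1 x' (by simp)
      have hy : y' ∉ S := hq2 y' (by simp)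
      have k1 : ∀ T, Separates G' A (insert x' S) T → Separates G A B T := by
        intro T hT a ha b hb p
        obtain ⟨c, hc, q, hq⟩ := walk_prefix hG1 (insert x' S) (by simp) p (by
          intro q
          obtain ⟨v, hv, hvS⟩ := hS a ha _ hb0 (q.append q2)
          rw [Walk.mem_support_append_iff] at hv
          rcases hv with hv | hv
          · exact ⟨v, hv, by simp [hvS]⟩
          · exact absurd hvS (hq2 v hv)) (by
          intro q
          obtain ⟨v, hv, hvS⟩ := hS a ha b hb q
          exact ⟨v, hv, by simp [hvS]⟩)
        obtain ⟨v, hv, hvT⟩ := hT a ha c hc q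
        exact ⟨v, hq v hv, hvT⟩
      have k2 : ∀ T, Separates G' (insert y' S) B T → Separates G A B T := by
        intro T hT
        apply Separates.symm
        intro b hb a ha p
        obtain ⟨c, hc, q, hq⟩ := walk_prefix (x := y') (y := x')
          (fun u v h1 h2 => (hG1 u v h1 h2).symm) (insert y' S) (by simp) p (by
          intro q
          obtain ⟨v, hv, hvS⟩ := hS.symm b hb _ ha0 (q.append q1.reverse)
          rw [Walk.mem_support_append_iff] at hv
          rcases hv with hv | hv
          · exact ⟨v, hv, by simp [hvS]⟩
          · exact absurd hvS (hq1 v (by simpa using hv))) (by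
          intro q
          obtain ⟨v, hv, hvS⟩ := hS.symm b hb a ha q
          exact ⟨v, hv, by simp [hvS]⟩)
        obtain ⟨v, hv, hvT⟩ := hT.symm b hb c hc q
        exact ⟨v, hq v hv, hvT⟩
      have hn : S.ncard + 1 = n := by
        have := hsep (insert x' S) (k1 _ (by
          intro a ha b hb p
          exact ⟨b, by simp, hb⟩))
        rw [Set.ncard_insert_of_notMem hx (Set.toFinite _)] at this
        omega
      exact linked_combine hle hS hx hy hadj hn (ih _ _ _ fun T hT => hsep T (k1 T hT))
        (ih _ _ _ fun T hT => hsep T (k2 T hT))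
    · push Not at hex
      obtain ⟨a, b, p, h1, h2, h3, h4, h5, h6⟩ := ih A B n hex
      refine Linked.of_walks a b (fun i => (p i).mapLe hle) h1 h2 ?_
      intro i j v hi hj
      exact h6 i j v (by simpa using hi) (by simpa using hj)

lemma bramble_path {V : Type} [Finite V] {G : SimpleGraph V} {F : Set (Set V)}
    (f1 : ∀ C ∈ F, CSet G C) (f2 : ∀ C ∈ F, ∀ D ∈ F, Touch G C D) (hF : F.Nonempty) :
    ∃ (a b : V) (p : G.Walk a b), p.IsPath ∧ ∀ C ∈ F, ∃ v ∈ p.support, v ∈ C := by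
  classical
  by_contra hcon
  push Not at hcon
  have key : ∀ n : ℕ, ∃ (a b : V) (p : G.Walk a b), p.IsPath ∧ n ≤ p.length ∧
      ∃ C ∈ F, b ∈ C ∧ ∀ v ∈ p.support, v ∈ C → v = b := by
    intro n
    induction n with
    | zero =>
      obtain ⟨C, hC⟩ := hF
      obtain ⟨x, hx⟩ := (f1 C hC).1
      exact ⟨x, x, Walk.nil, by simp, by simp, C, hC, hx, by simp⟩
    | succ n ih =>
      obtain ⟨a, b, p, hp, hn, C, hC, hb, hv⟩ := ih
      obtain ⟨C', hC', hmiss⟩ := hcon a b p hp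
      obtain ⟨c', hc'⟩ := (f1 C' hC').1
      obtain ⟨w, hw⟩ := ((f1 C hC).union_touch (f1 C' hC') (f2 C hC C' hC')).2 b (Or.inl hb) c'
        (Or.inr hc')
      obtain ⟨b1, b', q, hb1, hb', hq, hqs, -, hqB⟩ :=
        exists_trim (A := {b}) (B := C') w rfl hc'
      have hb1 : b1 = b := hb1
      subst hb1
      have hne : b1 ≠ b' := by
        rintro rfl
        exact hmiss b1 (by simp) hb'
      have hql : 1 ≤ q.length := by
        by_contra h0
        exact hne (Walk.eq_of_length_eq_zero (p := q) (by omega))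
      have hqn : b1 ∉ q.support.tail := by
        have := hq.support_nodup
        rw [← Walk.cons_tail_support] at this
        exact (List.nodup_cons.1 this).1
      refine ⟨a, b', p.append q, ?_, ?_, C', hC', hb', ?_⟩
      · rw [Walk.isPath_def, Walk.support_append, List.nodup_append']
        refine ⟨hp.support_nodup, hq.support_nodup.tail, ?_⟩
        intro v hvp hvq
        have hvq' := List.mem_of_mem_tail hvq
        rcases hw v (hqs v hvq') with h | h
        · exact hqn (hv v hvp h ▸ hvq)
        · exact hmiss v hvp h
      · rw [Walk.length_append]; omega
      · intro v hv' hvC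
        rw [Walk.mem_support_append_iff] at hv'
        rcases hv' with h | h
        · exact absurd hvC (hmiss v h)
        · exact hqB v h hvC
  have := Fintype.ofFinite V
  obtain ⟨a, b, p, hp, hn, -⟩ := key (Fintype.card V)
  have := hp.length_lt
  omega

/-- Two disjoint consecutive segments of a path which are highly linked. -/
lemma two_segments {V : Type} [Finite V] {G : SimpleGraph V} {F : Set (Set V)} {m : ℕ}
    (hm : 0 < m)
    (f1 : ∀ C ∈ F, CSet G C) (f2 : ∀ C ∈ F, ∀ D ∈ F, Touch G C D)
    (f3 : ∀ X : Set V, X.ncard ≤ 2 * m → ∃ C ∈ F, ∀ u ∈ C, u ∉ X) :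
    ∃ (a b : V) (p : G.Walk a b) (s : ℕ), p.IsPath ∧
      Linked G {v | ∃ i, i < s ∧ i ≤ p.length ∧ p.getVert i = v}
        {v | ∃ i, s ≤ i ∧ i ≤ p.length ∧ p.getVert i = v} m := by
  classical
  have hF : F.Nonempty := by
    obtain ⟨C, hC, -⟩ := f3 ∅ (by simp)
    exact ⟨C, hC⟩
  obtain ⟨a, b, p, hp, hcov⟩ := bramble_path f1 f2 hF
  have hcov' : ∀ C ∈ F, ∃ i, i ≤ p.length ∧ p.getVert i ∈ C := by
    intro C hC
    obtain ⟨v, hv, hvC⟩ := hcov C hC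
    obtain ⟨i, hi, hil⟩ := Walk.mem_support_iff_exists_getVert.1 hv
    exact ⟨i, hil, hi ▸ hvC⟩
  let P : ℕ → Prop := fun s => ∀ X : Set V, X.ncard < m →
    ∃ C ∈ F, (∃ i, i < s ∧ i ≤ p.length ∧ p.getVert i ∈ C) ∧ ∀ u ∈ C, u ∉ X
  have hex : ∃ s, P s := by
    refine ⟨p.length + 1, fun X hX => ?_⟩
    obtain ⟨C, hC, hu⟩ := f3 X (by omega)
    obtain ⟨i, hi, hiC⟩ := hcov' C hC
    exact ⟨C, hC, ⟨i, by omega, hi, hiC⟩, hu⟩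
  let s := Nat.find hex
  have hs : P s := Nat.find_spec hex
  have hs0 : s ≠ 0 := by
    intro h0
    obtain ⟨C, hC, ⟨i, hi, -⟩, -⟩ := hs ∅ (by simpa using hm)
    omega
  have hs1 : ¬ P (s - 1) := Nat.find_min hex (by omega)
  simp only [P] at hs1
  push Not at hs1
  obtain ⟨X0, hX0, hX0c⟩ := hs1
  refine ⟨a, b, p, s, hp, menger G _ _ m ?_⟩
  intro S hS
  by_contra hlt
  push Not at hlt
  obtain ⟨C, hC, ⟨i, his, hil, hiC⟩, hCS⟩ := hs S hlt
  obtain ⟨D, hD, hDX⟩ := f3 (S ∪ X0 ∪ {p.getVert (s - 1)}) (by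
    have h1 := Set.ncard_union_le (S ∪ X0) {p.getVert (s - 1)}
    have h2 := Set.ncard_union_le S X0
    rw [Set.ncard_singleton] at h1
    omega)
  obtain ⟨j, hjl, hjD⟩ := hcov' D hD
  have hsj : s ≤ j := by
    by_contra hjs
    by_cases hj : j = s - 1
    · subst hj
      exact hDX _ hjD (by simp)
    · obtain ⟨u, hu, huX⟩ := hX0c D hD ⟨j, by omega, hjl, hjD⟩
      exact hDX u hu (by simp [huX])
  obtain ⟨w, hw⟩ := ((f1 C hC).union_touch (f1 D hD) (f2 C hC D hD)).2 _ (Or.inl hiC) _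
    (Or.inr hjD)
  obtain ⟨v, hv, hvS⟩ := hS _ ⟨i, his, hil, rfl⟩ _ ⟨j, hsj, hjl, rfl⟩ w
  rcases hw v hv with h | h
  · exact hCS v h hvS
  · exact hDX v h (by simp [hvS])

/-- Erdős–Szekeres -/
lemma erdos_szekeres_aux {n : ℕ} (hn : 0 < n) {m : ℕ} (hm : m = n * n) (f g : Fin m → ℕ)
    (hf : Function.Injective f) (hg : Function.Injective g) :
    ∃ e : Fin n → Fin m, StrictMono (fun i => f (e i)) ∧
      (StrictMono (fun i => g (e i)) ∨ StrictAnti (fun i => g (e i))) := by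
  classical
  -- chain ending at i
  have main : ∀ R : ℕ → ℕ → Prop, ∃ L : Fin m → ℕ,
      (∀ i, ∀ k ≤ L i, ∃ e : ℕ → Fin m, e k = i ∧
        ∀ t < k, f (e t) < f (e (t + 1)) ∧ R (g (e t)) (g (e (t + 1)))) ∧
      (∀ i j, f i < f j → R (g i) (g j) → L i < L j) := by
    intro R
    let Q : Fin m → ℕ → Prop := fun i k => ∃ e : ℕ → Fin m, e k = i ∧
        ∀ t < k, f (e t) < f (e (t + 1)) ∧ R (g (e t)) (g (e (t + 1)))
    have hdown : ∀ i k, Q i (k + 1) → Q i k := by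
      rintro i k ⟨e, he, h⟩
      exact ⟨fun t => e (t + 1), he, fun t ht => h (t + 1) (by omega)⟩
    have hbound : ∀ i k, Q i k → k ≤ f i := by
      rintro i k ⟨e, he, h⟩
      have : ∀ t ≤ k, t ≤ f (e t) := by
        intro t
        induction t with
        | zero => simp
        | succ t ih => intro ht; have := ih (by omega); have := (h t (by omega)).1; omega
      have := this k le_rfl
      rwa [he] at this
    have hdown' : ∀ i k l, l ≤ k → Q i k → Q i l := by
      intro i k l hl
      induction k, hl using Nat.le_induction with
      | base => exact id
      | succ k hk ih => exact fun h => ih (hdown i k h)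
    refine ⟨fun i => Nat.findGreatest (Q i) (f i), ?_, ?_⟩
    · intro i k hk
      have h0 : Q i 0 := ⟨fun _ => i, rfl, by simp⟩
      have := Nat.findGreatest_spec (P := Q i) (Nat.zero_le (f i)) h0
      exact hdown' i _ k hk this
    · intro i j hij hR
      have h0 : Q i 0 := ⟨fun _ => i, rfl, by simp⟩
      obtain ⟨e, he, h⟩ := Nat.findGreatest_spec (P := Q i) (Nat.zero_le (f i)) h0
      set k := Nat.findGreatest (Q i) (f i) with hk
      have : Q j (k + 1) := by
        refine ⟨fun t => if t = k + 1 then j else e t, by simp, ?_⟩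
        intro t ht
        by_cases htk : t = k
        · subst htk
          simp [he, hij, hR]
        · have := h t (by omega)
          have h1 : t ≠ k + 1 := by omega
          simpa [htk, h1] using this
      have hb := hbound j _ this
      exact Nat.le_findGreatest hb this
  obtain ⟨L1, hL1, hL1'⟩ := main (· < ·)
  obtain ⟨L2, hL2, hL2'⟩ := main (· > ·)
  have hbig : ∃ i, n ≤ L1 i + 1 ∨ n ≤ L2 i + 1 := by
    by_contra hcon
    push Not at hcon
    let φ : Fin m → Fin (n - 1) × Fin (n - 1) := fun i =>
      (⟨L1 i, by have := hcon i; omega⟩, ⟨L2 i, by have := hcon i; omega⟩)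
    have hφ : Function.Injective φ := by
      intro i j hij
      by_contra hne
      simp [φ] at hij
      have h1 : f i ≠ f j := fun h => hne (hf h)
      have h2 : g i ≠ g j := fun h => hne (hg h)
      rcases lt_or_gt_of_ne h1 with h1 | h1 <;> rcases lt_or_gt_of_ne h2 with h2 | h2
      · have := hL1' i j h1 h2; omega
      · have := hL2' i j h1 h2; omega
      · have := hL2' j i h1 h2; omega
      · have := hL1' j i h1 h2; omega
    have := Fintype.card_le_of_injective φ hφ
    simp [hm] at this
    obtain ⟨k, rfl⟩ : ∃ k, n = k + 1 := ⟨n - 1, by omega⟩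
    simp at this
    nlinarith
  have fin : ∀ (R : ℕ → ℕ → Prop) (_ : ∀ a b c, R a b → R b c → R a c) (i : Fin m)
      (_ : ∃ e : ℕ → Fin m, e (n - 1) = i ∧
        ∀ t < n - 1, f (e t) < f (e (t + 1)) ∧ R (g (e t)) (g (e (t + 1)))),
      ∃ e : Fin n → Fin m, StrictMono (fun i => f (e i)) ∧ ∀ a b, a < b → R (g (e a)) (g (e b)) := by
    rintro R htr i ⟨e, -, he⟩
    have key : ∀ a b, a < b → b ≤ n - 1 → f (e a) < f (e b) ∧ R (g (e a)) (g (e b)) := by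
      intro a b hab
      induction b, hab using Nat.le_induction with
      | base => intro hb; exact he a (by omega)
      | succ b hab ih =>
        intro hb
        have h1 := ih (by omega)
        have h2 := he b (by omega)
        exact ⟨h1.1.trans h2.1, htr _ _ _ h1.2 h2.2⟩
    refine ⟨fun i => e i, ?_, ?_⟩
    · intro a b hab
      exact (key a b hab (by omega)).1
    · intro a b hab
      exact (key a b hab (by omega)).2
  obtain ⟨i, hi | hi⟩ := hbig
  · obtain ⟨e, h1, h2⟩ := fin (· < ·) (fun a b c => lt_trans) i (hL1 i (n - 1) (by omega))
    exact ⟨e, h1, Or.inl h2⟩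
  · obtain ⟨e, h1, h2⟩ := fin (· > ·) (fun a b c h h' => gt_trans h h') i (hL2 i (n - 1) (by omega))
    exact ⟨e, h1, Or.inr h2⟩


lemma theta_of {V : Type} {G : SimpleGraph V} {r : ℕ} {A B : Set V} (hAB : ∀ v ∈ A, v ∉ B)
    (hA : CSet G A) (hB : CSet G B) (x y : Fin r → V) (hx : ∀ i, x i ∈ A) (hy : ∀ i, y i ∈ B)
    (hyi : Function.Injective y) (hadj : ∀ i, G.Adj (x i) (y i)) :
    ∃ H : G.Subgraph, IsThetaModel r G H ∧ H.verts = A ∪ B := by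
  let H : G.Subgraph :=
    { verts := A ∪ B
      Adj := fun u v => G.Adj u v ∧ ((u ∈ A ∧ v ∈ A) ∨ (u ∈ B ∧ v ∈ B) ∨
        ∃ i, (u = x i ∧ v = y i) ∨ (u = y i ∧ v = x i))
      adj_sub := fun h => h.1
      edge_vert := by
        rintro u v ⟨-, h | h | ⟨i, h | h⟩⟩
        · exact Or.inl h.1
        · exact Or.inr h.1
        · rw [h.1]; exact Or.inl (hx i)
        · rw [h.1]; exact Or.inr (hy i)
      symm := ⟨by
        rintro u v ⟨h1, h⟩
        refine ⟨h1.symm, ?_⟩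
        rcases h with h | h | ⟨i, h⟩
        · exact Or.inl h.symm
        · exact Or.inr (Or.inl h.symm)
        · exact Or.inr (Or.inr ⟨i, by tauto⟩)⟩ }
  have conn : ∀ C : Set V, CSet G C → (∀ u ∈ C, ∀ v ∈ C, G.Adj u v → H.Adj u v) →
      (H.induce C).Connected := by
    intro C hC h
    have h1 := connected_induce_iff.1 (cset_iff.1 hC)
    have hle : (⊤ : G.Subgraph).induce C ≤ H.induce C := by
     constructor
     · exact le_rfl
     · intro u v huv
       simp at huv ⊢
       exact ⟨huv.1, huv.2.1, h u huv.1 v huv.2.1 huv.2.2⟩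
    exact Subgraph.Connected.mono hle (by simp) h1
  refine ⟨H, ⟨A, B, rfl, Set.disjoint_left.2 hAB, conn A hA ?_, conn B hB ?_, ?_⟩, rfl⟩
  · intro u hu v hv h
    exact ⟨h, Or.inl ⟨hu, hv⟩⟩
  · intro u hu v hv h
    exact ⟨h, Or.inr (Or.inl ⟨hu, hv⟩)⟩
  · have e : {e ∈ H.edgeSet | ∃ a ∈ A, ∃ b ∈ B, e = s(a, b)} = Set.range (fun i => s(x i, y i)) := by
      ext e
      constructor
      · rintro ⟨he, a, ha, b, hb, rfl⟩
        have he' : H.Adj a b := he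
        have hab := hAB a ha
        have hba := hAB b
        rcases he' with ⟨-, h | h | ⟨i, h | h⟩⟩
        · exact absurd hb (hba h.2)
        · exact absurd h.1 hab
        · exact ⟨i, by simp [h.1, h.2]⟩
        · exact absurd (h.1 ▸ hy i) hab
      · rintro ⟨i, rfl⟩
        refine ⟨?_, x i, hx i, y i, hy i, rfl⟩
        show H.Adj (x i) (y i)
        exact ⟨hadj i, Or.inr (Or.inr ⟨i, Or.inl ⟨rfl, rfl⟩⟩)⟩
    rw [e, Set.ncard_range_of_injective]
    · simp
    · intro i j hij
      simp only [Sym2.eq_iff] at hij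
      rcases hij with h | h
      · exact hyi h.2
      · exact absurd (h.1 ▸ hx i) (fun hh => hAB _ hh (hy j))

lemma cut_last {V : Type} {G : SimpleGraph V} {a b : V} (p : G.Walk a b) (hab : a ≠ b) :
    ∃ (c : V) (q : G.Walk a c), G.Adj c b ∧ ∀ v ∈ q.support, v ∈ p.support ∧ v ≠ b := by
  induction p with
  | nil => exact absurd rfl hab
  | cons h p ih =>
    rename_i u v w
    by_cases hv : v = w
    · subst hv
      exact ⟨u, Walk.nil, h, by simp [hab]⟩
    · obtain ⟨c, q, hc, hq⟩ := ih hv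
      refine ⟨c, Walk.cons h q, hc, ?_⟩
      intro z hz
      rw [Walk.support_cons, List.mem_cons] at hz ⊢
      rcases hz with rfl | hz
      · exact ⟨Or.inl rfl, hab⟩
      · exact ⟨Or.inr (hq z hz).1, (hq z hz).2⟩

lemma cset_interval {V : Type} {G : SimpleGraph V} {a b : V} (p : G.Walk a b) (I : Set ℕ)
    (hne : I.Nonempty) (hI : ∀ x ∈ I, ∀ y ∈ I, ∀ z, x ≤ z → z ≤ y → z ∈ I)
    (hl : ∀ x ∈ I, x ≤ p.length) : CSet G (p.getVert '' I) := by
  refine ⟨hne.image _, ?_⟩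
  have key : ∀ x ∈ I, ∀ y, x ≤ y → y ∈ I →
      ∃ q : G.Walk (p.getVert x) (p.getVert y), ∀ w ∈ q.support, w ∈ p.getVert '' I := by
    intro x hx y hxy
    induction y, hxy using Nat.le_induction with
    | base => intro _; exact ⟨Walk.nil, by simpa using ⟨x, hx, rfl⟩⟩
    | succ y hxy ih =>
      intro hy
      obtain ⟨q, hq⟩ := ih (hI x hx _ hy y hxy (by omega))
      have := hl _ hy
      refine ⟨q.concat (p.adj_getVert_succ (by omega)), ?_⟩
      intro w hw
      rw [Walk.support_concat] at hw
      simp only [List.concat_eq_append, List.mem_append, List.mem_singleton] at hw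
      rcases hw with hw | rfl
      · exact hq w hw
      · exact ⟨_, hy, rfl⟩
  rintro _ ⟨x, hx, rfl⟩ _ ⟨y, hy, rfl⟩
  rcases le_total x y with h | h
  · exact key x hx y h hy
  · obtain ⟨q, hq⟩ := key y hy x h hx
    exact ⟨q.reverse, by simpa using hq⟩

lemma cset_union_family {V ι : Type} {G : SimpleGraph V} {C : Set V} {D : ι → Set V}
    (hC : CSet G C) (hD : ∀ j, CSet G (D j)) (h : ∀ j, ∃ u ∈ C, u ∈ D j) :
    CSet G (C ∪ {v | ∃ j, v ∈ D j}) := by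
  have key : ∀ x ∈ C ∪ {v | ∃ j, v ∈ D j}, ∃ y ∈ C, ∃ q : G.Walk x y,
      ∀ w ∈ q.support, w ∈ C ∪ {v | ∃ j, v ∈ D j} := by
    rintro x (hx | ⟨j, hx⟩)
    · exact ⟨x, hx, Walk.nil, by simp [hx]⟩
    · obtain ⟨u, hu, huD⟩ := h j
      obtain ⟨q, hq⟩ := (hD j).2 x hx u huD
      exact ⟨u, hu, q, fun w hw => Or.inr ⟨j, hq w hw⟩⟩
  refine ⟨hC.1.mono (by grind), ?_⟩
  intro x hx y hy
  obtain ⟨x', hx', q, hq⟩ := key x hx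
  obtain ⟨y', hy', q', hq'⟩ := key y hy
  obtain ⟨w, hw⟩ := hC.2 x' hx' y' hy'
  refine ⟨(q.append w).append q'.reverse, ?_⟩
  intro v hv
  simp only [Walk.mem_support_append_iff, Walk.support_reverse, List.mem_reverse] at hv
  rcases hv with (hv | hv) | hv
  · exact hq v hv
  · exact Or.inl (hw v hv)
  · exact hq' v hv

lemma cset_support {V : Type} {G : SimpleGraph V} {a b : V} (p : G.Walk a b) :
    CSet G {v | v ∈ p.support} := cset_iff.2 p.connected_induce_support

lemma packing_of_linked {V : Type} {G : SimpleGraph V} {k r : ℕ} (hk : 0 < k) (hr : 0 < r)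
    {u0 v0 : V} (p : G.Walk u0 v0) (hp : p.IsPath) (s : ℕ)
    (hL : Linked G {v | ∃ i, i < s ∧ i ≤ p.length ∧ p.getVert i = v}
        {v | ∃ i, s ≤ i ∧ i ≤ p.length ∧ p.getVert i = v} ((k * r) * (k * r))) :
    HasVertexPacking r G k := by
  classical
  obtain ⟨a, b, q, ha, hb, -, qa, qb, qd⟩ := hL
  choose f hf1 hf2 hf3 using ha
  choose g hg1 hg2 hg3 using hb
  have hainj : Function.Injective a := by
    intro i j hij
    refine qd i j (a i) (by simp) ?_
    rw [hij]; simp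
  have hbinj : Function.Injective b := by
    intro i j hij
    refine qd i j (b i) (by simp) ?_
    rw [hij]; simp
  have hfinj : Function.Injective f := fun i j h => hainj (by rw [← hf3, ← hf3, h])
  have hginj : Function.Injective g := fun i j h => hbinj (by rw [← hg3, ← hg3, h])
  have hpinj : ∀ x y, x ≤ p.length → y ≤ p.length → p.getVert x = p.getVert y → x = y :=
    fun x y hx hy h => hp.getVert_injOn hx hy h
  have hab : ∀ i, a i ≠ b i := by
    intro i h
    rw [← hf3, ← hg3] at h
    have := hpinj _ _ (hf2 i) (hg2 i) h
    have := hf1 i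
    have := hg1 i
    omega
  choose c q' hc hq' using fun i => cut_last (q i) (hab i)
  obtain ⟨e, he1, he2⟩ := erdos_szekeres_aux (Nat.mul_pos hk hr) rfl f g hfinj hginj
  have heinj : Function.Injective e := fun i j h => he1.injective (by simp [h])
  let idx : Fin k → Fin r → Fin ((k * r) * (k * r)) := fun t j => e (finProdFinEquiv (t, j))
  have hidx : ∀ t t' j j', idx t j = idx t' j' → t = t' ∧ j = j' := by
    intro t t' j j' h
    have := finProdFinEquiv.injective (heinj h)
    simpa using this
  have hlt : ∀ t t' : Fin k, t < t' → ∀ j j' : Fin r,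
      finProdFinEquiv (t, j) < finProdFinEquiv (t', j') := by
    intro t t' h j j'
    rw [Fin.lt_def] at h ⊢
    simp only [finProdFinEquiv_apply_val]
    have h1 := j.2
    have h2 : r * (t.1 + 1) ≤ r * t'.1 := Nat.mul_le_mul_left r h
    rw [Nat.mul_add] at h2
    omega
  let I : Fin k → Set ℕ := fun t => {x | ∃ j j', f (idx t j) ≤ x ∧ x ≤ f (idx t j')}
  let J : Fin k → Set ℕ := fun t => {x | ∃ j j', g (idx t j) ≤ x ∧ x ≤ g (idx t j')}
  have hI : ∀ t t' x, x ∈ I t → x ∈ I t' → t = t' := by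
    have aux : ∀ t t' x, t < t' → x ∈ I t → x ∈ I t' → False := by
      rintro t t' x h ⟨-, j, -, hj⟩ ⟨j', -, hj', -⟩
      have := he1 (hlt t t' h j j')
      simp only at this
      simp only [idx] at hj hj'
      omega
    intro t t' x h1 h2
    rcases lt_trichotomy t t' with h | h | h
    · exact (aux t t' x h h1 h2).elim
    · exact h
    · exact (aux t' t x h h2 h1).elim
  have hJ : ∀ t t' x, x ∈ J t → x ∈ J t' → t = t' := by
    have aux : ∀ t t' x, t < t' → x ∈ J t → x ∈ J t' → False := by
      rintro t t' x h ⟨i, j, hi, hj⟩ ⟨i', j', hi', hj'⟩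
      simp only [idx] at hi hj hi' hj'
      rcases he2 with he2 | he2
      · have := he2 (hlt t t' h j i')
        simp only at this
        omega
      · have := he2 (hlt t t' h i j')
        simp only at this
        omega
    intro t t' x h1 h2
    rcases lt_trichotomy t t' with h | h | h
    · exact (aux t t' x h h1 h2).elim
    · exact h
    · exact (aux t' t x h h2 h1).elim
  have fI : ∀ t j, f (idx t j) ∈ I t := fun t j => ⟨j, j, le_rfl, le_rfl⟩
  have gJ : ∀ t j, g (idx t j) ∈ J t := fun t j => ⟨j, j, le_rfl, le_rfl⟩
  have Is : ∀ t, ∀ x ∈ I t, x < s ∧ x ≤ p.length := by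
    rintro t x ⟨-, j, -, h⟩
    exact ⟨h.trans_lt (hf1 _), h.trans (hf2 _)⟩
  have Js : ∀ t, ∀ x ∈ J t, s ≤ x ∧ x ≤ p.length := by
    rintro t x ⟨i, j, h', h⟩
    exact ⟨(hg1 _).trans h', h.trans (hg2 _)⟩
  let AA : Fin k → Set V := fun t => p.getVert '' I t ∪ {v | ∃ j, v ∈ {v | v ∈ (q' (idx t j)).support}}
  let BB : Fin k → Set V := fun t => p.getVert '' J t
  have hex : ∀ t, ∃ H : G.Subgraph, IsThetaModel r G H ∧ H.verts = AA t ∪ BB t := by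
    intro t
    refine theta_of ?_ ?_ ?_ (fun j => c (idx t j)) (fun j => b (idx t j)) ?_ ?_ ?_ ?_
    · rintro v (⟨x, hx, rfl⟩ | ⟨j, hv⟩) ⟨y, hy, hyv⟩
      · have h1 := Is t x hx
        have h2 := Js t y hy
        have := hpinj _ _ h2.2 h1.2 hyv
        omega
      · have h1 := hq' _ v hv
        have h2 := Js t y hy
        exact h1.2 (qb _ v h1.1 ⟨y, h2.1, h2.2, hyv⟩)
    · refine cset_union_family (cset_interval p _ ⟨_, fI t ⟨0, hr⟩⟩ ?_ fun x hx => (Is t x hx).2)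
        (fun j => cset_support _) ?_
      · rintro x ⟨i, -, hi, -⟩ y ⟨-, j, -, hj⟩ z hxz hzy
        exact ⟨i, j, hi.trans hxz, hzy.trans hj⟩
      · intro j
        exact ⟨a (idx t j), ⟨_, fI t j, hf3 _⟩, by simp⟩
    · refine cset_interval p _ ⟨_, gJ t ⟨0, hr⟩⟩ ?_ fun x hx => (Js t x hx).2
      rintro x ⟨i, -, hi, -⟩ y ⟨-, j, -, hj⟩ z hxz hzy
      exact ⟨i, j, hi.trans hxz, hzy.trans hj⟩
    · intro j
      exact Or.inr ⟨j, by simp⟩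
    · intro j
      exact ⟨_, gJ t j, hg3 _⟩
    · intro j j' h
      exact (hidx _ _ _ _ (hbinj h)).2
    · intro j
      exact hc _
  choose H hH hHv using hex
  have hcase : ∀ t, ∀ v ∈ (H t).verts, (∃ x ∈ I t, p.getVert x = v) ∨
      (∃ x ∈ J t, p.getVert x = v) ∨ ∃ j, v ∈ (q (idx t j)).support := by
    intro t v hv
    rw [hHv] at hv
    rcases hv with (h | ⟨j, h⟩) | h
    · exact Or.inl h
    · exact Or.inr (Or.inr ⟨j, (hq' _ v h).1⟩)
    · exact Or.inr (Or.inl h)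
  have hIJ : ∀ t t', ∀ x ∈ I t, ∀ y ∈ J t', p.getVert x ≠ p.getVert y := by
    intro t t' x hx y hy h
    have h1 := Is t x hx
    have h2 := Js t' y hy
    have := hpinj _ _ h1.2 h2.2 h
    omega
  have hIq : ∀ t t' j, ∀ x ∈ I t, p.getVert x ∈ (q (idx t' j)).support → t = t' := by
    intro t t' j x hx h
    have h1 := Is t x hx
    have h2 := qa _ _ h ⟨x, h1.1, h1.2, rfl⟩
    rw [← hf3] at h2
    have h3 := hpinj _ _ h1.2 (hf2 _) h2
    exact hI t t' x hx (h3 ▸ fI t' j)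
  have hJq : ∀ t t' j, ∀ x ∈ J t, p.getVert x ∈ (q (idx t' j)).support → t = t' := by
    intro t t' j x hx h
    have h1 := Js t x hx
    have h2 := qb _ _ h ⟨x, h1.1, h1.2, rfl⟩
    rw [← hg3] at h2
    have h3 := hpinj _ _ h1.2 (hg2 _) h2
    exact hJ t t' x hx (h3 ▸ gJ t' j)
  refine ⟨H, hH, ?_⟩
  intro t t' htt
  rw [Set.disjoint_left]
  intro v hv hv'
  apply htt
  rcases hcase t v hv with ⟨x, hx, rfl⟩ | ⟨x, hx, rfl⟩ | ⟨j, hj⟩ <;>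
    rcases hcase t' _ hv' with ⟨y, hy, hxy⟩ | ⟨y, hy, hxy⟩ | ⟨j', hj'⟩
  · have := hpinj _ _ (Is _ y hy).2 (Is _ x hx).2 hxy
    exact hI t t' x hx (this ▸ hy)
  · exact absurd hxy.symm (hIJ t t' x hx y hy)
  · exact hIq t t' j' x hx hj'
  · exact absurd hxy (hIJ t' t y hy x hx)
  · have := hpinj _ _ (Js _ y hy).2 (Js _ x hx).2 hxy
    exact hJ t t' x hx (this ▸ hy)
  · exact hJq t t' j' x hx hj'
  · subst hxy
    exact (hIq t' t j y hy hj).symm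
  · subst hxy
    exact (hJq t' t j y hy hj).symm
  · exact (hidx _ _ _ _ (qd _ _ v hj hj')).1

/-- If G has treewidth at least 2k²r² (every tree decomposition has a bag of size
larger than 2k²r², i.e. width at least 2k²r²) then G contains k pairwise
vertex-disjoint models of θ_r. -/
theorem stmt4 {V : Type} [Fintype V] (G : SimpleGraph V) (k r : ℕ) (hk : 0 < k) (hr : 0 < r)
    (htw : ∀ (ι : Type) (D : TreeDecomp G ι), ∃ i, 2 * k ^ 2 * r ^ 2 < (D.bag i).ncard) :
    HasVertexPacking r G k := by
  have hm : 2 * k ^ 2 * r ^ 2 = 2 * ((k * r) * (k * r)) := by ring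
  rw [hm] at htw
  obtain ⟨F, f1, f2, f3⟩ := bramble_of_tw G _ htw
  have hpos : 0 < (k * r) * (k * r) := Nat.mul_pos (Nat.mul_pos hk hr) (Nat.mul_pos hk hr)
  obtain ⟨a, b, p, s, hp, hL⟩ := two_segments hpos f1 f2 f3
  exact packing_of_linked hk hr p hp s hL
end

section
/- Let r ≥ 2 and suppose f : ℕ → ℕ is a function such that every graph with at most k vertex-disjoint θ_r-models has a set of at most f(k) vertices meeting every θ_r-model. Then every graph with fewer than k edge-disjoint θ_r-models has a set of at most 2kr·f(k) edges meeting every θ_r-model. -/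
open SimpleGraph

/-- `G` contains `k` pairwise edge-disjoint models of `θ_r`. -/
def HasEdgePacking {V : Type} (r : ℕ) (G : SimpleGraph V) (k : ℕ) : Prop :=
  ∃ H : Fin k → G.Subgraph, (∀ i, IsThetaModel r G (H i)) ∧
    ∀ i j, i ≠ j → Disjoint (H i).edgeSet (H j).edgeSet

/-- Connectedness of a set with respect to a relation. -/
def RConn {V : Type} (R : V → V → Prop) (S : Set V) : Prop :=
  S.Nonempty ∧ ∀ x ∈ S, ∀ y ∈ S,
    Relation.ReflTransGen (fun a b => R a b ∧ a ∈ S ∧ b ∈ S) x y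

lemma rtg_lift {α β : Type} {r : α → α → Prop} {p : β → β → Prop} {a b : α} (f : α → β)
    (h : ∀ a b, r a b → p (f a) (f b)) (hab : Relation.ReflTransGen r a b) :
    Relation.ReflTransGen p (f a) (f b) := by
  induction hab with
  | refl => exact .refl
  | tail h1 h2 ih => exact ih.tail (h _ _ h2)

lemma rtg_mono {α : Type} {r p : α → α → Prop} {a b : α}
    (h : ∀ a b, r a b → p a b) (hab : Relation.ReflTransGen r a b) :
    Relation.ReflTransGen p a b := rtg_lift id h hab

lemma rconn_iff {V : Type} {G : SimpleGraph V} (H : G.Subgraph) (A : Set V) :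
    (H.induce A).Connected ↔ RConn H.Adj A := by
  rw [SimpleGraph.Subgraph.connected_iff', SimpleGraph.connected_iff]
  constructor
  · rintro ⟨h1, ⟨⟨z, hz⟩⟩⟩
    refine ⟨⟨z, hz⟩, fun x hx y hy => ?_⟩
    have := h1 ⟨x, hx⟩ ⟨y, hy⟩
    rw [SimpleGraph.reachable_iff_reflTransGen] at this
    refine rtg_lift (fun a => a.1) ?_ this
    rintro ⟨a, ha⟩ ⟨b, hb⟩ h
    simp at h
    exact ⟨h.2.2, ha, hb⟩
  · rintro ⟨⟨z, hz⟩, h⟩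
    refine ⟨?_, ⟨⟨z, hz⟩⟩⟩
    rintro ⟨x, hx⟩ ⟨y, hy⟩
    rw [SimpleGraph.reachable_iff_reflTransGen]
    have := h x hx y hy
    clear h
    induction this with
    | refl => exact Relation.ReflTransGen.refl
    | @tail b c h1 h2 ih =>
      refine (ih h2.2.1).tail ?_
      simp
      exact ⟨h2.2.1, h2.2.2, h2.1⟩

/-- The set of crossing pairs. -/
def crossP {V : Type} (R : V → V → Prop) (A B : Set V) : Set (V × V) :=
  {p | p.1 ∈ A ∧ p.2 ∈ B ∧ R p.1 p.2}

lemma cross_ncard {V : Type} {G : SimpleGraph V} (H : G.Subgraph) (A B : Set V)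
    (hd : Disjoint A B) :
    {e ∈ H.edgeSet | ∃ a ∈ A, ∃ b ∈ B, e = s(a, b)}.ncard = (crossP H.Adj A B).ncard := by
  have : {e ∈ H.edgeSet | ∃ a ∈ A, ∃ b ∈ B, e = s(a, b)}
      = (fun p : V × V => s(p.1, p.2)) '' (crossP H.Adj A B) := by
    ext e
    constructor
    · rintro ⟨he, a, ha, b, hb, rfl⟩
      exact ⟨(a, b), ⟨ha, hb, by simpa using he⟩, rfl⟩
    · rintro ⟨⟨a, b⟩, ⟨ha, hb, hab⟩, rfl⟩
      exact ⟨by simpa using hab, a, ha, b, hb, rfl⟩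
  rw [this, Set.ncard_image_of_injOn]
  rintro ⟨a, b⟩ ⟨ha, hb, hab⟩ ⟨c, d⟩ ⟨hc, hd', hcd⟩ h
  simp only [Sym2.eq_iff] at h
  rcases h with ⟨rfl, rfl⟩ | ⟨rfl, rfl⟩
  · rfl
  · exact absurd hd' (Set.disjoint_left.1 hd ha)

lemma model_iff {V : Type} (r : ℕ) {G : SimpleGraph V} (H : G.Subgraph) :
    IsThetaModel r G H ↔ ∃ A B : Set V, A ∪ B = H.verts ∧ Disjoint A B ∧
      RConn H.Adj A ∧ RConn H.Adj B ∧ (crossP H.Adj A B).ncard = r := by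
  unfold IsThetaModel
  simp only [rconn_iff]
  constructor
  · rintro ⟨A, B, h1, h2, h3, h4, h5⟩
    exact ⟨A, B, h1, h2, h3, h4, by rw [← cross_ncard H A B h2]; exact h5⟩
  · rintro ⟨A, B, h1, h2, h3, h4, h5⟩
    exact ⟨A, B, h1, h2, h3, h4, by rw [cross_ncard H A B h2]; exact h5⟩

lemma rconn_mono {V : Type} {R R' : V → V → Prop} {S : Set V} (h : RConn R S)
    (hR : ∀ x ∈ S, ∀ y ∈ S, R x y → R' x y) : RConn R' S :=
  ⟨h.1, fun x hx y hy => rtg_mono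
    (fun a b hab => ⟨hR a hab.2.1 b hab.2.2 hab.1, hab.2⟩) (h.2 x hx y hy)⟩

lemma rconn_union {V : Type} {R : V → V → Prop} {S T : Set V} (hS : RConn R S)
    (hT : RConn R T) (z w : V) (hz : z ∈ S) (hw : w ∈ T)
    (h1 : z = w ∨ (R z w ∧ R w z)) : RConn R (S ∪ T) := by
  have hSm : ∀ x ∈ S, ∀ y ∈ S,
      Relation.ReflTransGen (fun a b => R a b ∧ a ∈ S ∪ T ∧ b ∈ S ∪ T) x y :=
    fun x hx y hy => rtg_mono
      (fun a b hab => ⟨hab.1, Or.inl hab.2.1, Or.inl hab.2.2⟩) (hS.2 x hx y hy)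
  have hTm : ∀ x ∈ T, ∀ y ∈ T,
      Relation.ReflTransGen (fun a b => R a b ∧ a ∈ S ∪ T ∧ b ∈ S ∪ T) x y :=
    fun x hx y hy => rtg_mono
      (fun a b hab => ⟨hab.1, Or.inr hab.2.1, Or.inr hab.2.2⟩) (hT.2 x hx y hy)
  have hzw : Relation.ReflTransGen (fun a b => R a b ∧ a ∈ S ∪ T ∧ b ∈ S ∪ T) z w := by
    rcases h1 with rfl | h1
    · exact .refl
    · exact .single ⟨h1.1, Or.inl hz, Or.inr hw⟩
  have hwz : Relation.ReflTransGen (fun a b => R a b ∧ a ∈ S ∪ T ∧ b ∈ S ∪ T) w z := by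
    rcases h1 with rfl | h1
    · exact .refl
    · exact .single ⟨h1.2, Or.inr hw, Or.inl hz⟩
  refine ⟨⟨z, Or.inl hz⟩, ?_⟩
  rintro x (hx | hx) y (hy | hy)
  · exact hSm x hx y hy
  · exact ((hSm x hx z hz).trans hzw).trans (hTm w hw y hy)
  · exact ((hTm x hx w hw).trans hwz).trans (hSm z hz y hy)
  · exact hTm x hx y hy

lemma rtg_symm {V : Type} {R : V → V → Prop} (hR : ∀ x y, R x y → R y x) {S : Set V} {x y : V}
    (h : Relation.ReflTransGen (fun a b => R a b ∧ a ∈ S ∧ b ∈ S) x y) :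
    Relation.ReflTransGen (fun a b => R a b ∧ a ∈ S ∧ b ∈ S) y x := by
  induction h with
  | refl => exact .refl
  | tail h1 h2 ih => exact .head ⟨hR _ _ h2.1, h2.2.2, h2.2.1⟩ ih

lemma rconn_of_root {V : Type} {R : V → V → Prop} (hR : ∀ x y, R x y → R y x) {S : Set V}
    (z : V) (hz : z ∈ S)
    (h : ∀ x ∈ S, Relation.ReflTransGen (fun a b => R a b ∧ a ∈ S ∧ b ∈ S) x z) :
    RConn R S :=
  ⟨⟨z, hz⟩, fun x hx y hy => (h x hx).trans (rtg_symm hR (h y hy))⟩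

/-- Sub-lemma: if every vertex on a walk to `z` stays in `T`. -/
lemma rtg_stay {V : Type} {R : V → V → Prop} {S T : Set V} {z : V} (hzT : z ∈ T)
    (hst : ∀ x ∈ T, x ≠ z → ∀ y ∈ S, R x y → y ∈ T) {x : V}
    (h : Relation.ReflTransGen (fun a b => R a b ∧ a ∈ S ∧ b ∈ S) x z) (hx : x ∈ T) :
    Relation.ReflTransGen (fun a b => R a b ∧ a ∈ T ∧ b ∈ T) x z := by
  induction h using Relation.ReflTransGen.head_induction_on with
  | refl => exact .refl
  | @head a c h1 h2 ih =>
    by_cases ha : a = z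
    · subst ha; exact .refl
    · have hc := hst a hx ha c h1.2.2 h1.1
      exact .head ⟨h1.1, hx, hc⟩ (ih hc)

lemma core {V : Type} {R : V → V → Prop} (hR : ∀ x y, R x y → R y x) {A B : Set V}
    (hA : RConn R A) (hB : RConn R B) (hd : Disjoint A B)
    (hmin : ∀ A' ⊆ A, RConn R A' → (∀ a ∈ A, ∀ b ∈ B, R a b → a ∈ A') → A' = A)
    (v : V) (hv : v ∈ A) : RConn R ((A ∪ B) \ {v}) := by
  obtain ⟨b0, hb0⟩ := hB.1
  have hBv : ∀ b ∈ B, b ∈ (A ∪ B) \ {v} := fun b hb =>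
    ⟨Or.inr hb, fun h => Set.disjoint_left.1 hd hv (by rw [← Set.mem_singleton_iff.1 h]; exact hb)⟩
  have hBr : ∀ b ∈ B, Relation.ReflTransGen
      (fun a b => R a b ∧ a ∈ (A ∪ B) \ {v} ∧ b ∈ (A ∪ B) \ {v}) b b0 := fun b hb =>
    rtg_mono (fun a c hab => ⟨hab.1, hBv _ hab.2.1, hBv _ hab.2.2⟩)
      (hB.2 b hb b0 hb0)
  set A' : Set V := {x ∈ A | x = v ∨ Relation.ReflTransGen
      (fun a b => R a b ∧ a ∈ (A ∪ B) \ {v} ∧ b ∈ (A ∪ B) \ {v}) x b0} with hA'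
  have hvA' : v ∈ A' := ⟨hv, Or.inl rfl⟩
  have key : A' = A := by
    apply hmin A' (fun x hx => hx.1)
    · refine rconn_of_root hR v hvA' (fun x hx => ?_)
      refine rtg_stay hvA' ?_ (hA.2 x hx.1 v hv) hx
      rintro x ⟨hxA, hx⟩ hxv y hy hxy
      refine ⟨hy, ?_⟩
      by_cases hyv : y = v
      · exact Or.inl hyv
      · right
        refine .head ⟨hR _ _ hxy, ⟨Or.inl hy, hyv⟩, ⟨Or.inl hxA, hxv⟩⟩ (hx.resolve_left hxv)
    · intro a ha b hb hab
      refine ⟨ha, ?_⟩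
      by_cases hav : a = v
      · exact Or.inl hav
      · exact Or.inr (.head ⟨hab, ⟨Or.inl ha, hav⟩, hBv b hb⟩ (hBr b hb))
  refine rconn_of_root hR b0 (hBv b0 hb0) ?_
  rintro x ⟨hx | hx, hxv⟩
  · rw [← key] at hx
    exact hx.2.resolve_left hxv
  · exact hBr x hx

lemma exists_min {V : Type} [Finite V] {R : V → V → Prop} {A : Set V} (L : Set V) (hL : L ⊆ A)
    (hA : RConn R A) : ∃ A' ⊆ A, L ⊆ A' ∧ RConn R A' ∧
      ∀ A'' ⊆ A', RConn R A'' → L ⊆ A'' → A'' = A' := by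
  obtain ⟨A', h1, h2⟩ := exists_minimal_le_of_wellFoundedLT
    (fun A' => L ⊆ A' ∧ RConn R A') A ⟨hL, hA⟩
  refine ⟨A', h1, h2.1.1, h2.1.2, fun A'' h3 h4 h5 => ?_⟩
  exact Set.Subset.antisymm h3 (h2.2 ⟨h5, h4⟩ h3)

lemma reduce {V : Type} [Finite V] {R : V → V → Prop} (hR : ∀ x y, R x y → R y x) {A B : Set V}
    (hA : RConn R A) (hB : RConn R B) (hd : Disjoint A B) (hne : (crossP R A B).Nonempty) :
    ∃ A' ⊆ A, ∃ B' ⊆ B, RConn R A' ∧ RConn R B' ∧ crossP R A' B' = crossP R A B ∧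
      ∀ v, RConn R ((A' ∪ B') \ {v}) := by
  obtain ⟨A', hA1, hA2, hA3, hA4⟩ := exists_min {a ∈ A | ∃ b ∈ B, R a b} (fun x hx => hx.1) hA
  obtain ⟨B', hB1, hB2, hB3, hB4⟩ := exists_min {b ∈ B | ∃ a ∈ A, R a b} (fun x hx => hx.1) hB
  have hc : crossP R A' B' = crossP R A B := by
    ext ⟨a, b⟩
    constructor
    · rintro ⟨h1, h2, h3⟩
      exact ⟨hA1 h1, hB1 h2, h3⟩
    · rintro ⟨h1, h2, h3⟩
      exact ⟨hA2 ⟨h1, b, h2, h3⟩, hB2 ⟨h2, a, h1, h3⟩, h3⟩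
  have hd' : Disjoint A' B' := Set.disjoint_of_subset hA1 hB1 hd
  refine ⟨A', hA1, B', hB1, hA3, hB3, hc, fun v => ?_⟩
  by_cases hvA : v ∈ A'
  · refine core hR hA3 hB3 hd' (fun A'' h1 h2 h3 => hA4 A'' h1 h2 ?_) v hvA
    rintro a ⟨ha, b, hb, hab⟩
    exact h3 a (hA2 ⟨ha, b, hb, hab⟩) b (hB2 ⟨hb, a, ha, hab⟩) hab
  by_cases hvB : v ∈ B'
  · rw [Set.union_comm]
    refine core hR hB3 hA3 hd'.symm (fun A'' h1 h2 h3 => hB4 A'' h1 h2 ?_) v hvB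
    rintro b ⟨hb, a, ha, hab⟩
    exact h3 b (hB2 ⟨hb, a, ha, hab⟩) a (hA2 ⟨ha, b, hb, hab⟩) (hR _ _ hab)
  · rw [Set.diff_singleton_eq_self (by rintro (h | h); exacts [hvA h, hvB h])]
    rw [← hc] at hne
    obtain ⟨⟨a, b⟩, ha, hb, hab⟩ := hne
    exact rconn_union hA3 hB3 a b ha hb (Or.inr ⟨hab, hR _ _ hab⟩)

/-- A family of edge-disjoint connected pieces with private marks; `none` is the residual. -/
structure Fam {V : Type} (R : V → V → Prop) (S : Set V) (ρ : V) (M : Set V) (r : ℕ)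
    (ι : Type) (E : Option ι → V → V → Prop) (B N : Option ι → Set V) : Prop where
  symm : ∀ o x y, E o x y → E o y x
  sub : ∀ o x y, E o x y → R x y
  mem : ∀ o x y, E o x y → x ∈ B o
  bs : ∀ o, B o ⊆ S
  conn : ∀ o, RConn (E o) (B o)
  nb : ∀ o, N o ⊆ B o
  nm : ∀ o, N o ⊆ M
  root : ρ ∈ B none
  ed : ∀ o o' x y, E o x y → E o' x y → o = o'
  nd : ∀ o o' x, x ∈ N o → x ∈ N o' → o = o'
  big : ∀ i, r ≤ (N (some i)).ncard

lemma rconn_singleton {V : Type} (R : V → V → Prop) (x : V) : RConn R {x} := by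
  refine ⟨⟨x, rfl⟩, ?_⟩
  rintro a rfl b rfl
  exact .refl

lemma fam_normalise {V : Type} {R : V → V → Prop} {S : Set V} {ρ : V} {M : Set V} {r : ℕ}
    (hr : 0 < r)
    {ι : Type} [Fintype ι] {E : Option ι → V → V → Prop} {B N : Option ι → Set V}
    (hF : Fam R S ρ M r ι E B N) (h2 : (N none).ncard ≤ 2 * r)
    (hM : M.ncard ≤ 2 * r * Fintype.card ι + (N none).ncard) :
    ∃ (ι : Type) (_ : Fintype ι) (E : Option ι → V → V → Prop) (B N : Option ι → Set V),
      Fam R S ρ M r ι E B N ∧ (N none).ncard < r ∧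
      M.ncard ≤ 2 * r * Fintype.card ι + (N none).ncard := by
  by_cases h : (N none).ncard < r
  · exact ⟨ι, inferInstance, E, B, N, hF, h, hM⟩
  refine ⟨Option ι, inferInstance, fun o => o.elim (fun _ _ => False) E,
    fun o => o.elim {ρ} B, fun o => o.elim ∅ N, ?_, by simpa using hr, ?_⟩
  · constructor
    · rintro (_ | o) x y h
      · exact h
      · exact hF.symm o x y h
    · rintro (_ | o) x y h
      · exact h.elim
      · exact hF.sub o x y h
    · rintro (_ | o) x y h
      · exact h.elim
      · exact hF.mem o x y h
    · rintro (_ | o)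
      · rintro x rfl
        exact hF.bs none hF.root
      · exact hF.bs o
    · rintro (_ | o)
      · exact rconn_singleton _ _
      · exact hF.conn o
    · rintro (_ | o)
      · exact Set.empty_subset _
      · exact hF.nb o
    · rintro (_ | o)
      · exact Set.empty_subset _
      · exact hF.nm o
    · rfl
    · rintro (_ | o) (_ | o') x y h h'
      · rfl
      · exact h.elim
      · exact h'.elim
      · rw [hF.ed o o' x y h h']
    · rintro (_ | o) (_ | o') x h h'
      · rfl
      · exact h.elim
      · exact h'.elim
      · rw [hF.nd o o' x h h']
    · rintro (_ | i)
      · exact not_lt.1 h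
      · exact hF.big i
  · simp only [Fintype.card_option, Option.elim, Set.ncard_empty]
    linarith

/-- Combine two option-indexed families. -/
def comb {α ι₁ ι₂ : Type} (a : α) (f : Option ι₁ → α) (g : Option ι₂ → α) :
    Option (ι₁ ⊕ ι₂) → α
  | none => a
  | some (Sum.inl i) => f (some i)
  | some (Sum.inr i) => g (some i)

lemma fam_merge {V : Type} {R : V → V → Prop} (hR : ∀ x y, R x y → R y x)
    {S S₁ S₂ : Set V} {ρ c : V} {M : Set V} {r : ℕ}
    {ι₁ : Type} {E₁ : Option ι₁ → V → V → Prop} {B₁ N₁ : Option ι₁ → Set V}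
    {ι₂ : Type} {E₂ : Option ι₂ → V → V → Prop} {B₂ N₂ : Option ι₂ → Set V}
    (h₁ : Fam R S₁ ρ (M ∩ S₁) r ι₁ E₁ B₁ N₁) (h₂ : Fam R S₂ c (M ∩ S₂) r ι₂ E₂ B₂ N₂)
    (hS : S₁ ∪ S₂ = S) (hd : Disjoint S₁ S₂) (hρc : R ρ c) :
    Fam R S ρ M r (ι₁ ⊕ ι₂)
      (comb (fun x y => E₁ none x y ∨ E₂ none x y ∨ (x = ρ ∧ y = c) ∨ (x = c ∧ y = ρ)) E₁ E₂)
      (comb (B₁ none ∪ B₂ none) B₁ B₂) (comb (N₁ none ∪ N₂ none) N₁ N₂) := by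
  have e1 : ∀ o x y, E₁ o x y → x ∈ S₁ ∧ y ∈ S₁ := fun o x y h =>
    ⟨h₁.bs o (h₁.mem o x y h), h₁.bs o (h₁.mem o y x (h₁.symm o x y h))⟩
  have e2 : ∀ o x y, E₂ o x y → x ∈ S₂ ∧ y ∈ S₂ := fun o x y h =>
    ⟨h₂.bs o (h₂.mem o x y h), h₂.bs o (h₂.mem o y x (h₂.symm o x y h))⟩
  have n1 : ∀ o x, x ∈ N₁ o → x ∈ S₁ := fun o x h => h₁.bs o (h₁.nb o h)
  have n2 : ∀ o x, x ∈ N₂ o → x ∈ S₂ := fun o x h => h₂.bs o (h₂.nb o h)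
  have r1 : ρ ∈ S₁ := h₁.bs none h₁.root
  have r2 : c ∈ S₂ := h₂.bs none h₂.root
  have dd : ∀ x, x ∈ S₁ → x ∈ S₂ → False := fun x h h' => Set.disjoint_left.1 hd h h'
  have ed1 := h₁.ed
  have ed2 := h₂.ed
  have nd1 := h₁.nd
  have nd2 := h₂.nd
  constructor
  · rintro (_ | i | i) x y h
    · rcases h with h | h | h | h
      · exact Or.inl (h₁.symm _ _ _ h)
      · exact Or.inr (Or.inl (h₂.symm _ _ _ h))
      · exact Or.inr (Or.inr (Or.inr ⟨h.2, h.1⟩))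
      · exact Or.inr (Or.inr (Or.inl ⟨h.2, h.1⟩))
    · exact h₁.symm _ _ _ h
    · exact h₂.symm _ _ _ h
  · rintro (_ | i | i) x y h
    · rcases h with h | h | ⟨rfl, rfl⟩ | ⟨rfl, rfl⟩
      · exact h₁.sub _ _ _ h
      · exact h₂.sub _ _ _ h
      · exact hρc
      · exact hR _ _ hρc
    · exact h₁.sub _ _ _ h
    · exact h₂.sub _ _ _ h
  · rintro (_ | i | i) x y h
    · rcases h with h | h | ⟨rfl, rfl⟩ | ⟨rfl, rfl⟩
      · exact Or.inl (h₁.mem _ _ _ h)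
      · exact Or.inr (h₂.mem _ _ _ h)
      · exact Or.inl h₁.root
      · exact Or.inr h₂.root
    · exact h₁.mem _ _ _ h
    · exact h₂.mem _ _ _ h
  · subst hS
    rintro (_ | i | i)
    · exact Set.union_subset_union (h₁.bs _) (h₂.bs _)
    · exact (h₁.bs _).trans Set.subset_union_left
    · exact (h₂.bs _).trans Set.subset_union_right
  · rintro (_ | i | i)
    · refine rconn_union (rconn_mono (h₁.conn none) fun x _ y _ h => Or.inl h)
        (rconn_mono (h₂.conn none) fun x _ y _ h => Or.inr (Or.inl h)) ρ c h₁.root h₂.root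
        (Or.inr ⟨?_, ?_⟩)
      · exact Or.inr (Or.inr (Or.inl ⟨rfl, rfl⟩))
      · exact Or.inr (Or.inr (Or.inr ⟨rfl, rfl⟩))
    · exact h₁.conn _
    · exact h₂.conn _
  · rintro (_ | i | i)
    · exact Set.union_subset_union (h₁.nb _) (h₂.nb _)
    · exact h₁.nb _
    · exact h₂.nb _
  · rintro (_ | i | i)
    · exact Set.union_subset ((h₁.nm _).trans Set.inter_subset_left)
        ((h₂.nm _).trans Set.inter_subset_left)
    · exact (h₁.nm _).trans Set.inter_subset_left
    · exact (h₂.nm _).trans Set.inter_subset_left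
  · exact Or.inl h₁.root
  · rintro (_ | i | i) (_ | j | j) x y h h' <;> simp only [comb] at h h' <;> grind
  · rintro (_ | i | i) (_ | j | j) x h h' <;> simp only [comb, Set.mem_union] at h h' <;> grind
  · rintro (i | i)
    · exact h₁.big i
    · exact h₂.big i

lemma exists_fam {V : Type} [Finite V] {R : V → V → Prop} (hR : ∀ x y, R x y → R y x) {r : ℕ}
    (hr : 2 ≤ r) (n : ℕ) : ∀ (S : Set V) (ρ : V) (M : Set V), S.ncard ≤ n → ρ ∈ S → M ⊆ S →
    RConn R S →
    ∃ (ι : Type) (_ : Fintype ι) (E : Option ι → V → V → Prop) (B N : Option ι → Set V),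
      Fam R S ρ M r ι E B N ∧ (N none).ncard < r ∧
      M.ncard ≤ 2 * r * Fintype.card ι + (N none).ncard := by
  induction n with
  | zero =>
    intro S ρ M hS hρ
    have : S = ∅ := (Set.ncard_eq_zero).1 (Nat.le_zero.1 hS)
    subst this
    exact hρ.elim
  | succ n ih =>
    intro S ρ M hS hρ hM hc
    by_cases hs : S = {ρ}
    · subst hs
      refine ⟨Empty, inferInstance, fun _ _ _ => False, fun _ => {ρ}, fun _ => M, ?_, ?_, by simp⟩
      · constructor
        · intro o x y h; exact h
        · intro o x y h; exact h.elim
        · intro o x y h; exact h.elim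
        · intro o; exact subset_rfl
        · intro o; exact rconn_singleton _ _
        · intro o; exact hM
        · intro o; exact subset_rfl
        · rfl
        · intro o o' x y h; exact h.elim
        · rintro (_ | ⟨⟨⟩⟩) (_ | ⟨⟨⟩⟩) x h h'; rfl
        · rintro ⟨⟩
      · have := Set.ncard_le_ncard hM
        rw [Set.ncard_singleton] at this
        show M.ncard < r
        omega
    · obtain ⟨y, hy, hyρ⟩ : ∃ y ∈ S, y ≠ ρ := by
        by_contra! h
        exact hs (Set.eq_singleton_iff_unique_mem.2 ⟨hρ, h⟩)
      obtain ⟨c, hcS, hρc⟩ : ∃ c ∈ S, R ρ c ∧ c ≠ ρ := by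
        by_contra! hcon
        have : ∀ z, Relation.ReflTransGen (fun a b => R a b ∧ a ∈ S ∧ b ∈ S) ρ z → z = ρ := by
          intro z hz
          induction hz with
          | refl => rfl
          | tail h1 h2 ih' => subst ih'; exact hcon _ h2.2.2 h2.1
        exact hyρ (this y (hc.2 ρ hρ y hy))
      obtain ⟨hρc, hcρ⟩ := hρc
      set S₂ : Set V := {x ∈ S \ {ρ} | Relation.ReflTransGen
        (fun a b => R a b ∧ a ∈ S \ {ρ} ∧ b ∈ S \ {ρ}) x c} with hS₂
      have hc2 : c ∈ S₂ := ⟨⟨hcS, hcρ⟩, .refl⟩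
      have hρ2 : ρ ∉ S₂ := fun h => h.1.2 rfl
      have hsub : S₂ ⊆ S := fun x h => h.1.1
      have hconn2 : RConn R S₂ := by
        refine rconn_of_root hR c hc2 fun x hx => ?_
        refine rtg_stay hc2 ?_ hx.2 hx
        intro x hx _ y hy hxy
        exact ⟨hy, .head ⟨hR _ _ hxy, hy, hx.1⟩ hx.2⟩
      have hρ1 : ρ ∈ S \ S₂ := ⟨hρ, hρ2⟩
      have hconn1 : RConn R (S \ S₂) := by
        refine rconn_of_root hR ρ hρ1 fun x hx => ?_
        refine rtg_stay hρ1 ?_ (hc.2 x hx.1 ρ hρ) hx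
        intro x hx hxρ y hy hxy
        refine ⟨hy, fun hy2 => hx.2 ?_⟩
        exact ⟨⟨hx.1, hxρ⟩, .head ⟨hxy, ⟨hx.1, hxρ⟩, hy2.1⟩ hy2.2⟩
      have hU : (S \ S₂) ∪ S₂ = S := Set.diff_union_of_subset hsub
      have hD : Disjoint (S \ S₂) S₂ := Set.disjoint_sdiff_left
      have hcard1 : (S \ S₂).ncard < S.ncard :=
        Set.ncard_lt_ncard ⟨Set.diff_subset, fun h => (h hcS).2 hc2⟩
      have hcard2 : S₂.ncard < S.ncard :=
        Set.ncard_lt_ncard ⟨hsub, fun h => hρ2 (h hρ)⟩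
      obtain ⟨ι₁, _, E₁, B₁, N₁, hF₁, hl₁, hM₁⟩ := ih (S \ S₂) ρ (M ∩ (S \ S₂)) (by omega) hρ1
        Set.inter_subset_right hconn1
      obtain ⟨ι₂, _, E₂, B₂, N₂, hF₂, hl₂, hM₂⟩ := ih S₂ c (M ∩ S₂) (by omega) hc2
        Set.inter_subset_right hconn2
      have hdN : Disjoint (N₁ none) (N₂ none) :=
        Set.disjoint_of_subset ((hF₁.nb _).trans (hF₁.bs _)) ((hF₂.nb _).trans (hF₂.bs _)) hD
      have hNc := Set.ncard_union_eq hdN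
      refine fam_normalise (by omega) (fam_merge hR hF₁ hF₂ hU hD hρc) ?_ ?_
      · simp only [comb]
        omega
      · simp only [comb, Fintype.card_sum]
        have : M = (M ∩ (S \ S₂)) ∪ (M ∩ S₂) := by
          rw [← Set.inter_union_distrib_left, hU, Set.inter_eq_left.2 hM]
        have h3 := Set.ncard_union_le (M ∩ (S \ S₂)) (M ∩ S₂)
        rw [← this] at h3
        rw [hNc, mul_add]
        omega

/-- Subgraph from a symmetric relation. -/
def mkSub {V : Type} (G : SimpleGraph V) (R : V → V → Prop) (hR : ∀ x y, R x y → R y x)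
    (hG : ∀ x y, R x y → G.Adj x y) (S : Set V) : G.Subgraph where
  verts := S
  Adj x y := R x y ∧ x ∈ S ∧ y ∈ S
  adj_sub h := hG _ _ h.1
  edge_vert h := h.2.1
  symm := ⟨fun x y h => ⟨hR _ _ h.1, h.2.2, h.2.1⟩⟩

lemma mkSub_model {V : Type} {G : SimpleGraph V} {R : V → V → Prop} (hR : ∀ x y, R x y → R y x)
    (hG : ∀ x y, R x y → G.Adj x y) {A B : Set V} {r : ℕ} (hd : Disjoint A B)
    (hA : RConn R A) (hB : RConn R B) (hc : (crossP R A B).ncard = r) :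
    IsThetaModel r G (mkSub G R hR hG (A ∪ B)) := by
  rw [model_iff]
  refine ⟨A, B, rfl, hd, ?_, ?_, ?_⟩
  · exact rconn_mono hA fun x hx y hy h => ⟨h, Or.inl hx, Or.inl hy⟩
  · exact rconn_mono hB fun x hx y hy h => ⟨h, Or.inr hx, Or.inr hy⟩
  · rw [← hc]
    congr 1
    ext ⟨a, b⟩
    constructor
    · rintro ⟨h1, h2, h3⟩
      exact ⟨h1, h2, h3.1⟩
    · rintro ⟨h1, h2, h3⟩
      exact ⟨h1, h2, h3, Or.inl h1, Or.inr h2⟩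

lemma edge_disj {V : Type} {G : SimpleGraph V} {H K : G.Subgraph}
    (h : ∀ x y, H.Adj x y → K.Adj x y → False) : Disjoint H.edgeSet K.edgeSet := by
  rw [Set.disjoint_left]
  intro e
  induction e using Sym2.ind with
  | _ x y =>
    intro h1 h2
    exact h x y (by simpa using h1) (by simpa using h2)

lemma degree_lemma {V : Type} [Finite V] (G : SimpleGraph V) {r k : ℕ} (hr : 2 ≤ r) (S : Set V)
    (v : V) (hv : v ∉ S) (hS : RConn G.Adj S)
    (hdeg : 2 * k * r ≤ {x ∈ S | G.Adj v x}.ncard) : HasEdgePacking r G k := by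
  obtain ⟨ρ, hρ⟩ := hS.1
  obtain ⟨ι, _, E, B, N, hF, hl, hM⟩ := exists_fam (fun x y h => SimpleGraph.Adj.symm h) hr S.ncard S ρ
    {x ∈ S | G.Adj v x} le_rfl hρ (fun x hx => hx.1) hS
  have hk : k ≤ Fintype.card ι := by
    by_contra hcon
    have : Fintype.card ι + 1 ≤ k := by omega
    nlinarith [Nat.mul_le_mul_left (2 * r) this]
  have hN : ∀ i, ∃ N' ⊆ N (some i), N'.ncard = r := fun i =>
    Set.exists_subset_card_eq (hF.big i)
  choose N' hN' hN'c using hN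
  obtain ⟨f⟩ : Nonempty (Fin k ↪ ι) := by
    apply Function.Embedding.nonempty_of_card_le
    simpa using hk
  let R : ι → V → V → Prop := fun i x y =>
    E (some i) x y ∨ (x = v ∧ y ∈ N' i) ∨ (y = v ∧ x ∈ N' i)
  have hRs : ∀ i x y, R i x y → R i y x := by
    rintro i x y (h | h | h)
    · exact Or.inl (hF.symm _ _ _ h)
    · exact Or.inr (Or.inr h)
    · exact Or.inr (Or.inl h)
  have hRG : ∀ i x y, R i x y → G.Adj x y := by
    rintro i x y (h | ⟨rfl, h⟩ | ⟨rfl, h⟩)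
    · exact hF.sub _ _ _ h
    · exact (hF.nm _ (hN' i h)).2
    · exact (hF.nm _ (hN' i h)).2.symm
  have hES : ∀ o x y, E o x y → x ∈ S ∧ y ∈ S := fun o x y h =>
    ⟨hF.bs o (hF.mem o x y h), hF.bs o (hF.mem o y x (hF.symm o x y h))⟩
  have hNS : ∀ i x, x ∈ N' i → x ∈ S := fun i x h => hF.bs _ (hF.nb _ (hN' i h))
  refine ⟨fun i => mkSub G (R (f i)) (hRs _) (hRG _) ({v} ∪ B (some (f i))), ?_, ?_⟩
  · intro i
    apply mkSub_model
    · rw [Set.disjoint_singleton_left]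
      exact fun h => hv (hF.bs _ h)
    · exact rconn_singleton _ _
    · exact rconn_mono (hF.conn _) fun x _ y _ h => Or.inl h
    · have : crossP (R (f i)) {v} (B (some (f i))) = (fun x => (v, x)) '' N' (f i) := by
        ext ⟨a, b⟩
        constructor
        · rintro ⟨h1, h2, h3⟩
          have h1 : a = v := h1
          subst h1
          rcases h3 with h3 | h3 | h3
          · exact (hv (hES _ _ _ h3).1).elim
          · exact ⟨b, h3.2, rfl⟩
          · exact (hv (hNS _ _ h3.2)).elim
        · rintro ⟨x, hx, h⟩
          obtain ⟨rfl, rfl⟩ := Prod.mk.inj h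
          exact ⟨rfl, hF.nb _ (hN' _ hx), Or.inr (Or.inl ⟨rfl, hx⟩)⟩
      rw [this, Set.ncard_image_of_injective _ (Prod.mk_right_injective v), hN'c]
  · intro i j hij
    have hij' : some (f i) ≠ some (f j) := by simpa using hij
    apply edge_disj
    rintro x y ⟨h, -⟩ ⟨h', -⟩
    rcases h with h | ⟨rfl, h⟩ | ⟨rfl, h⟩ <;> rcases h' with h' | ⟨h0, h'⟩ | ⟨h0, h'⟩
    · exact hij' (hF.ed _ _ _ _ h h')
    · subst h0; exact hv (hES _ _ _ h).1
    · subst h0; exact hv (hES _ _ _ h).2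
    · exact hv (hES _ _ _ h').1
    · exact hij' (hF.nd _ _ _ (hN' _ h) (hN' _ h'))
    · exact hv (hNS _ _ h')
    · exact hv (hES _ _ _ h').2
    · exact hv (hNS _ _ h')
    · exact hij' (hF.nd _ _ _ (hN' _ h) (hN' _ h'))

/-- Two-connected vertex sets (including single edges). -/
def Blk {V : Type} (G : SimpleGraph V) (S : Set V) : Prop := ∀ v, RConn G.Adj (S \ {v})

lemma blk_union {V : Type} {G : SimpleGraph V} {S T : Set V} (hS : Blk G S) (hT : Blk G T)
    {x y : V} (hxy : x ≠ y) (hx : x ∈ S) (hx' : x ∈ T) (hy : y ∈ S) (hy' : y ∈ T) :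
    Blk G (S ∪ T) := by
  intro v
  rw [Set.union_diff_distrib]
  by_cases h : x = v
  · have h' : y ≠ v := fun h' => hxy (h.trans h'.symm)
    exact rconn_union (hS v) (hT v) y y ⟨hy, h'⟩ ⟨hy', h'⟩ (Or.inl rfl)
  · exact rconn_union (hS v) (hT v) x x ⟨hx, h⟩ ⟨hx', h⟩ (Or.inl rfl)

lemma maxblk_eq {V : Type} {G : SimpleGraph V} {S T : Set V} (hS : Maximal (Blk G) S)
    (hT : Maximal (Blk G) T)
    {x y : V} (hxy : x ≠ y) (hx : x ∈ S) (hx' : x ∈ T) (hy : y ∈ S) (hy' : y ∈ T) : S = T := by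
  have h := blk_union hS.1 hT.1 hxy hx hx' hy hy'
  apply Set.Subset.antisymm
  · exact Set.subset_union_left.trans (hT.2 h Set.subset_union_right)
  · exact Set.subset_union_right.trans (hS.2 h Set.subset_union_left)

/-- Disjoint union of the blocks. -/
def blockGraph {V : Type} (G : SimpleGraph V) : SimpleGraph (Set V × V) where
  Adj p q := p.1 = q.1 ∧ Maximal (Blk G) p.1 ∧ p.2 ∈ p.1 ∧ q.2 ∈ p.1 ∧ G.Adj p.2 q.2
  symm := ⟨by
    rintro ⟨S, x⟩ ⟨T, y⟩ ⟨h1, h2, h3, h4, h5⟩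
    simp only at h1
    subst h1
    exact ⟨rfl, h2, h4, h3, h5.symm⟩⟩
  loopless := ⟨by
    rintro ⟨S, x⟩ h
    exact G.loopless.irrefl x h.2.2.2.2⟩

lemma rtg_fst {V : Type} {G : SimpleGraph V} {H : (blockGraph G).Subgraph} {A : Set (Set V × V)}
    {p q : Set V × V} (h : Relation.ReflTransGen (fun a b => H.Adj a b ∧ a ∈ A ∧ b ∈ A) p q) :
    p.1 = q.1 := by
  induction h with
  | refl => rfl
  | tail h1 h2 ih => exact ih.trans (H.adj_sub h2.1).1

lemma rconn_pull {V : Type} {R : Set V × V → Set V × V → Prop} {S : Set V}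
    {A : Set (Set V × V)} (hA : RConn R A) (hS : ∀ p ∈ A, p.1 = S) :
    RConn (fun x y => R (S, x) (S, y)) {x | (S, x) ∈ A} := by
  obtain ⟨⟨⟨T, z⟩, hz⟩, h⟩ := hA
  have hT : T = S := hS _ hz
  subst hT
  refine ⟨⟨z, hz⟩, fun x hx y hy => ?_⟩
  refine rtg_lift Prod.snd ?_ (h _ hx _ hy)
  rintro ⟨S1, a⟩ ⟨S2, b⟩ ⟨h1, h2, h3⟩
  obtain rfl : S1 = T := hS _ h2
  obtain rfl : S2 = S1 := hS _ h3
  exact ⟨h1, h2, h3⟩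

lemma rconn_push {V : Type} {R : V → V → Prop} {R' : Set V × V → Set V × V → Prop} (S : Set V)
    {A : Set V} (hA : RConn R A) (hR : ∀ x ∈ A, ∀ y ∈ A, R x y → R' (S, x) (S, y)) :
    RConn R' (Prod.mk S '' A) := by
  obtain ⟨⟨z, hz⟩, h⟩ := hA
  refine ⟨⟨_, z, hz, rfl⟩, ?_⟩
  rintro _ ⟨x, hx, rfl⟩ _ ⟨y, hy, rfl⟩
  refine rtg_lift (Prod.mk S) ?_ (h _ hx _ hy)
  rintro a b ⟨h1, h2, h3⟩
  exact ⟨hR _ h2 _ h3 h1, ⟨a, h2, rfl⟩, ⟨b, h3, rfl⟩⟩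

lemma model_pull {V : Type} [Finite V] {G : SimpleGraph V} {r : ℕ} (hr : 2 ≤ r)
    {H : (blockGraph G).Subgraph} (hH : IsThetaModel r (blockGraph G) H) :
    ∃ (S : Set V) (K : G.Subgraph), IsThetaModel r G K ∧
      ∀ x y, K.Adj x y → H.Adj (S, x) (S, y) := by
  rw [model_iff] at hH
  obtain ⟨A, B, hAB, hd, hA, hB, hc⟩ := hH
  obtain ⟨⟨p, q⟩, hp, hq, hpq⟩ : (crossP H.Adj A B).Nonempty := by
    apply Set.nonempty_of_ncard_ne_zero
    omega
  simp only at hp hq hpq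
  have h1 := (H.adj_sub hpq).1
  have hAS : ∀ a ∈ A, a.1 = p.1 := fun a ha => rtg_fst (hA.2 a ha p hp)
  have hBS : ∀ a ∈ B, a.1 = p.1 := fun a ha => (rtg_fst (hB.2 a ha q hq)).trans h1.symm
  obtain ⟨S, p⟩ := p
  refine ⟨S, mkSub G (fun x y => H.Adj (S, x) (S, y)) (fun x y h => SimpleGraph.Subgraph.Adj.symm h)
    (fun x y h => (H.adj_sub h).2.2.2.2) ({x | (S, x) ∈ A} ∪ {x | (S, x) ∈ B}), ?_, ?_⟩
  · apply mkSub_model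
    · rw [Set.disjoint_left] at hd ⊢
      exact fun x hx => hd hx
    · exact rconn_pull hA hAS
    · exact rconn_pull hB hBS
    · have : crossP H.Adj A B = (fun p : V × V => ((S, p.1), (S, p.2))) ''
          crossP (fun x y => H.Adj (S, x) (S, y)) {x | (S, x) ∈ A} {x | (S, x) ∈ B} := by
        ext ⟨⟨S1, a⟩, ⟨S2, b⟩⟩
        constructor
        · rintro ⟨ha, hb, hab⟩
          obtain rfl : S1 = S := hAS _ ha
          obtain rfl : S2 = S1 := hBS _ hb
          exact ⟨(a, b), ⟨ha, hb, hab⟩, rfl⟩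
        · rintro ⟨⟨x, y⟩, ⟨ha, hb, hab⟩, h⟩
          rw [← h]
          exact ⟨ha, hb, hab⟩
      rw [← hc, this, Set.ncard_image_of_injective]
      rintro ⟨a, b⟩ ⟨c, d⟩ h
      simpa using h
  · intro x y h
    exact h.1

lemma packing_pull {V : Type} [Finite V] {G : SimpleGraph V} {r k : ℕ} (hr : 2 ≤ r)
    (h : HasVertexPacking r (blockGraph G) (k + 1)) : HasEdgePacking r G k := by
  obtain ⟨H, hH, hd⟩ := h
  choose S K hK hKH using fun i => model_pull hr (hH i)
  refine ⟨fun i => K i.castSucc, fun i => hK _, fun i j hij => edge_disj ?_⟩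
  intro x y h1 h2
  have h1 := hKH _ _ _ h1
  have h2 := hKH _ _ _ h2
  obtain ⟨-, a2, a3, a4, a5⟩ := (H _).adj_sub h1
  obtain ⟨-, b2, b3, b4, b5⟩ := (H _).adj_sub h2
  have hS := maxblk_eq a2 b2 a5.ne a3 b3 a4 b4
  simp only at hS
  have hne : i.castSucc ≠ j.castSucc := by simpa using hij
  refine Set.disjoint_left.1 (hd _ _ hne) ((H _).edge_vert h1) ?_
  rw [hS]
  exact (H _).edge_vert h2

lemma model_push {V : Type} [Finite V] {G : SimpleGraph V} {r : ℕ} (hr : 2 ≤ r)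
    {H : G.Subgraph} (hH : IsThetaModel r G H) :
    ∃ K : (blockGraph G).Subgraph, IsThetaModel r (blockGraph G) K ∧
      ∀ p ∈ K.verts, ∃ q, (blockGraph G).Adj p q ∧ H.Adj p.2 q.2 := by
  rw [model_iff] at hH
  obtain ⟨A, B, hAB, hd, hA, hB, hc⟩ := hH
  have hne : (crossP H.Adj A B).Nonempty := by
    apply Set.nonempty_of_ncard_ne_zero
    omega
  obtain ⟨A', hA1, B', hB1, hA2, hB2, hc', hblk⟩ := reduce (fun x y h => SimpleGraph.Subgraph.Adj.symm h) hA hB hd hne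
  have hblk' : Blk G (A' ∪ B') := fun v =>
    rconn_mono (hblk v) fun x _ y _ h => H.adj_sub h
  obtain ⟨S, hS, hSmax⟩ := exists_maximal_ge_of_wellFoundedGT (Blk G) _ hblk'
  have hd' : Disjoint A' B' := Set.disjoint_of_subset hA1 hB1 hd
  have hinj : Function.Injective (Prod.mk S : V → Set V × V) := Prod.mk_right_injective S
  let R : Set V × V → Set V × V → Prop := fun p q =>
    p.1 = S ∧ q.1 = S ∧ p.2 ∈ A' ∪ B' ∧ q.2 ∈ A' ∪ B' ∧ H.Adj p.2 q.2
  have hRG : ∀ p q, R p q → (blockGraph G).Adj p q := by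
    rintro ⟨S1, x⟩ ⟨S2, y⟩ ⟨rfl, h2, h3, h4, h5⟩
    exact ⟨h2.symm, hSmax, hS h3, hS h4, H.adj_sub h5⟩
  refine ⟨mkSub (blockGraph G) R
    (fun p q h => ⟨h.2.1, h.1, h.2.2.2.1, h.2.2.1, SimpleGraph.Subgraph.Adj.symm h.2.2.2.2⟩) hRG
    (Prod.mk S '' A' ∪ Prod.mk S '' B'), ?_, ?_⟩
  · apply mkSub_model
    · exact (Set.disjoint_image_iff hinj).2 hd'
    · exact rconn_push S hA2 fun x hx y hy h => ⟨rfl, rfl, Or.inl hx, Or.inl hy, h⟩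
    · exact rconn_push S hB2 fun x hx y hy h => ⟨rfl, rfl, Or.inr hx, Or.inr hy, h⟩
    · have : crossP R (Prod.mk S '' A') (Prod.mk S '' B') =
          (fun p : V × V => ((S, p.1), (S, p.2))) '' crossP H.Adj A' B' := by
        ext ⟨p, q⟩
        constructor
        · rintro ⟨⟨a, ha, rfl⟩, ⟨b, hb, rfl⟩, h⟩
          exact ⟨(a, b), ⟨ha, hb, h.2.2.2.2⟩, rfl⟩
        · rintro ⟨⟨x, y⟩, ⟨ha, hb, hab⟩, h⟩
          rw [← h]
          exact ⟨⟨x, ha, rfl⟩, ⟨y, hb, rfl⟩, rfl, rfl, Or.inl ha, Or.inr hb, hab⟩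
      rw [this, Set.ncard_image_of_injective, hc', hc]
      rintro ⟨a, b⟩ ⟨c, d⟩ h
      simpa using h
  · have hcn : RConn H.Adj (A' ∪ B') := by
      rw [← hc'] at hne
      obtain ⟨⟨a, b⟩, ha, hb, hab⟩ := hne
      exact rconn_union hA2 hB2 a b ha hb (Or.inr ⟨hab, SimpleGraph.Subgraph.Adj.symm hab⟩)
    rintro p hp
    obtain ⟨x, hx, rfl⟩ : ∃ x ∈ A' ∪ B', (S, x) = p := by
      rcases hp with ⟨x, hx, h⟩ | ⟨x, hx, h⟩
      · exact ⟨x, Or.inl hx, h⟩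
      · exact ⟨x, Or.inr hx, h⟩
    obtain ⟨z, hz, hzx⟩ := (hblk x).1
    rcases Relation.ReflTransGen.cases_head (hcn.2 x hx z hz) with h | ⟨y, hy, -⟩
    · exact (hzx h.symm).elim
    · exact ⟨(S, y), hRG _ _ ⟨rfl, rfl, hy.2.1, hy.2.2, hy.1⟩, hy.1⟩

/-- If every graph with at most k vertex-disjoint θ_r-models has a set of at most f(k)
vertices meeting every θ_r-model, then every graph with fewer than k edge-disjoint
θ_r-models has a set of at most 2kr·f(k) edges meeting every θ_r-model. -/
theorem stmt10 (r : ℕ) (hr : 2 ≤ r) (f : ℕ → ℕ)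
    (hf : ∀ (W : Type) [Fintype W] (G : SimpleGraph W) (k : ℕ),
      ¬ HasVertexPacking r G (k + 1) →
      ∃ X : Set W, X.ncard ≤ f k ∧
        ∀ H : G.Subgraph, IsThetaModel r G H → ∃ v ∈ X, v ∈ H.verts) :
    ∀ (W : Type) [Fintype W] (G : SimpleGraph W) (k : ℕ),
      ¬ HasEdgePacking r G k →
      ∃ Y : Set (Sym2 W), Y.ncard ≤ 2 * k * r * f k ∧
        ∀ H : G.Subgraph, IsThetaModel r G H → ∃ e ∈ Y, e ∈ H.edgeSet := by
  intro W _ G k hk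
  have : Fintype (Set W × W) := Fintype.ofFinite _
  obtain ⟨X, hX, hit⟩ := hf (Set W × W) (blockGraph G) k (fun h => hk (packing_pull hr h))
  let D : Set W × W → Set (Sym2 W) := fun p => {e | ∃ q, (blockGraph G).Adj p q ∧ e = s(p.2, q.2)}
  have hD : ∀ p, (D p).ncard ≤ 2 * k * r := by
    rintro ⟨S, x⟩
    by_cases hne : (D (S, x)).Nonempty
    · obtain ⟨_, ⟨_, q⟩, ⟨h1, h2, h3, -⟩, -⟩ := hne
      have hlt : {y ∈ S \ {x} | G.Adj x y}.ncard < 2 * k * r := by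
        by_contra! hcon
        exact hk (degree_lemma G hr (S \ {x}) x (fun h => h.2 rfl) (h2.1 x) hcon)
      have hsub : D (S, x) ⊆ (fun y => s(x, y)) '' {y ∈ S \ {x} | G.Adj x y} := by
        rintro _ ⟨⟨_, y⟩, ⟨_, _, _, h4, h5⟩, rfl⟩
        exact ⟨y, ⟨⟨h4, h5.ne'⟩, h5⟩, rfl⟩
      exact ((Set.ncard_le_ncard hsub).trans (Set.ncard_image_le)).trans hlt.le
    · rw [Set.not_nonempty_iff_eq_empty.1 hne]
      simp
  refine ⟨⋃ p ∈ X, D p, ?_, ?_⟩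
  · classical
    have hfin : X.Finite := Set.toFinite X
    have h1 : (⋃ p ∈ X, D p).ncard ≤ ∑ p ∈ hfin.toFinset, (D p).ncard := by
      have := Finset.set_ncard_biUnion_le hfin.toFinset D
      simpa using this
    have h2 : ∑ p ∈ hfin.toFinset, (D p).ncard ≤ hfin.toFinset.card * (2 * k * r) := by
      simpa using Finset.sum_le_card_nsmul hfin.toFinset (fun p => (D p).ncard) (2 * k * r)
        (fun p _ => hD p)
    rw [← Set.ncard_eq_toFinset_card X hfin] at h2
    calc _ ≤ X.ncard * (2 * k * r) := h1.trans h2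
      _ ≤ f k * (2 * k * r) := Nat.mul_le_mul_right _ hX
      _ = _ := mul_comm _ _
  · intro H hH
    obtain ⟨K, hK, hKv⟩ := model_push hr hH
    obtain ⟨p, hpX, hp⟩ := hit K hK
    obtain ⟨q, h1, h2⟩ := hKv p hp
    refine ⟨s(p.2, q.2), ?_, by simpa using h2⟩
    simp only [Set.mem_iUnion]
    exact ⟨p, hpX, q, h1, rfl⟩
end
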